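/- arXiv:2104.07025 — 2 statements merged into one kernel-verified Lean document; each statement's English description precedes it below -/
import Mathlib

section
/- Let n be a positive integer with n ≡ 2 (mod 3) and let M = (2n-1)/3 or M = n-1. Then, modulo [n]*Phi_n(q)^5, sum_{k=0}^{M} [6k+1] ((q;q^3)_k^6 / (q^3;q^3)_k^6) q^{3k} ≡ 5 [2n] * ((q^2;q^3)_{(2n-1)/3}^3 / (q^3;q^3)_{(2n-1)/3}^3). -/
open Finset

/-- The generator `q` of the field `ℚ(q)` of rational functions. -/
noncomputable def q : RatFunc ℚ := RatFunc.X

/-- The `q`-integer `[r] = (1 - q^r)/(1 - q)`. -/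
noncomputable def qint (r : ℤ) : RatFunc ℚ := (1 - q ^ r) / (1 - q)

/-- The `q`-shifted factorial `(x; b)_m = (1-x)(1-xb)⋯(1-x b^(m-1))`. -/
noncomputable def qpoch (x b : RatFunc ℚ) (m : ℕ) : RatFunc ℚ :=
  ∏ i ∈ Finset.range m, (1 - x * b ^ i)

/-- `f ≡ g (mod P)`: `f - g = P * (r/s)` with `s` coprime to `P`. -/
def qcong (f g : RatFunc ℚ) (P : Polynomial ℚ) : Prop :=
  ∃ r s : Polynomial ℚ, IsCoprime s P ∧
    f - g = algebraMap (Polynomial ℚ) (RatFunc ℚ) P *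
      (algebraMap (Polynomial ℚ) (RatFunc ℚ) r / algebraMap (Polynomial ℚ) (RatFunc ℚ) s)

/-!
Multiplied by the parameters `x₀, …, x₄`, five of the six factors `(q; q ^ 3)_k` deform the sum
into a very-well-poised one. When some `xⱼ` equals `q ^ (-2 * n)`, the sum terminates and
Jackson's `₈φ₇` summation, proved here by a Wilf–Zeilberger certificate, evaluates it modulo the
sixth power of any common divisor of `1 - q ^ n` and the `1 - xⱼ`.

At a primitive `n`-th root of unity `ζ` we expand `q = ζ * (1 + X) ^ 30` and let the parameters
run through `(s, s ^ 2, s ^ 3, s ^ 4, s ^ (-10))`. On this curve there are five values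
`s ≡ 1 (mod X)` at which some parameter equals `q ^ (-2 * n)`, and for `X = 0` the sum vanishes
identically in `s` by the antisymmetry of its terms. Interpolation then gains the factor `X ^ 6`
at `s = 1`, that is, the factor `Φ_n ^ 6`. At a primitive `d`-th root of unity with `d` a proper
divisor of `n`, the terms with `X = 0` split into blocks of length `d`, each of which vanishes by
the same antisymmetry; this yields one factor `Φ_d`. The cyclotomic polynomials being pairwise
coprime, these local statements combine to the congruence.
-/

section ShiftedFactorial

variable {A B : Type*} [CommRing A] [CommRing B]

/-- The `q`-shifted factorial `(x; p)_k` over an arbitrary commutative ring; over `ℚ(q)` it is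
`qpoch`. -/
def shiftedFact (x p : A) (k : ℕ) : A :=
  ∏ i ∈ range k, (1 - x * p ^ i)

lemma shiftedFact_succ (x p : A) (k : ℕ) :
    shiftedFact x p (k + 1) = shiftedFact x p k * (1 - x * p ^ k) :=
  prod_range_succ _ _

lemma map_shiftedFact (f : A →+* B) (x p : A) (k : ℕ) :
    f (shiftedFact x p k) = shiftedFact (f x) (f p) k := by
  simp only [shiftedFact, map_prod, map_sub, map_one, map_mul, map_pow]

lemma shiftedFact_add (x p : A) (k l : ℕ) :
    shiftedFact x p (k + l) = shiftedFact x p k * shiftedFact (x * p ^ k) p l := by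
  simp only [shiftedFact, prod_range_add, pow_add, mul_assoc]

end ShiftedFactorial

section Jackson

variable {A : Type*} [CommRing A] (a b c d L p : A)

/-- The numerator factor of Jackson's very-well-poised sum: the `k`-th numerator is the product of
its values at `z = p ^ i`, `i < k`. -/
def jacksonNum (z : A) : A :=
  (1 - a * z) * (1 - b * z) * (1 - c * z) * (1 - d * z)

/-- The denominator factor of Jackson's sum, where `L * c * d = a / b` and so on. -/
def jacksonDen (z : A) : A :=
  (1 - z) * (1 - L * c * d * z) * (1 - L * b * d * z) * (1 - L * b * c * z)

/-- The `k`-th summand of Jackson's terminating very-well-poised `₈φ₇` sum with `a = L * b * c * d`,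
multiplied by a common denominator so that it makes sense in every commutative ring. -/
def jacksonTerm (N k : ℕ) : A :=
  (1 - a * p ^ (2 * k)) * (L * p) ^ k *
    (∏ i ∈ range k, jacksonNum a b c d (p ^ i)) *
    (∏ i ∈ Ico k N, jacksonDen b c d L (p ^ (i + 1))) *
    shiftedFact (L * p) p (N - k) * shiftedFact (a * L * p) p (N + k) *
    (∏ i ∈ range k, (1 - p ^ (N - i))) * ∏ i ∈ Ico (N + k) (2 * N), (1 - a * p ^ (i + 1))

/-- The Wilf–Zeilberger certificate of Jackson's sum: up to the factor `jacksonRatio`, the terms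
`jacksonTerm N k` and `jacksonTerm (N + 1) k` differ by the increment of `jacksonCert N` at `k`. -/
def jacksonCert (N k : ℕ) : A :=
  -(p ^ (N + 1 - k) * (1 - a * L * p ^ (2 * (N + 1)))) * (L * p) ^ k *
    (∏ i ∈ range k, jacksonNum a b c d (p ^ i)) *
    (∏ i ∈ Ico k (N + 1), jacksonDen b c d L (p ^ i)) *
    shiftedFact (L * p) p (N + 1 - k) * shiftedFact (a * L * p) p (N + k) *
    (∏ i ∈ range k, (1 - p ^ (N + 1 - i))) *
    ∏ i ∈ Ico (N + k) (2 * (N + 1)), (1 - a * p ^ (i + 1))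

/-- The ratio of consecutive values, at `N + 1` and `N`, of Jackson's sum. -/
def jacksonRatio (N : ℕ) : A :=
  (1 - p ^ (N + 1)) * (1 - a * p ^ (2 * N + 1)) * (1 - a * p ^ (2 * N + 2)) *
    (1 - a * L * p ^ (N + 1)) * (1 - L * d * p ^ (N + 1)) * (1 - L * c * p ^ (N + 1)) *
    (1 - L * b * p ^ (N + 1))

variable {a b c d L}

lemma jackson_certificate_identity (ha : a = L * b * c * d) (y t : A) :
    (1 - a * y ^ 2) * ((1 - L * t) * (1 - a * L * (y * t) * y) * jacksonDen b c d L (y * t) -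
      (1 - a * L * (y * t)) * (1 - L * d * (y * t)) * (1 - L * c * (y * t)) *
        (1 - L * b * (y * t)) * (1 - t) * (1 - a * y * (y * t))) =
    -(t * (1 - a * L * (y * t) ^ 2)) *
      (L * jacksonNum a b c d y * (1 - a * L * (y * t) * y) * (1 - t) -
        jacksonDen b c d L y * (1 - L * t) * (1 - a * y * (y * t))) := by
  subst ha
  unfold jacksonNum jacksonDen
  ring

lemma jackson_prod_shift (k j : ℕ) :
    (1 - p ^ (k + j + 1)) * ∏ i ∈ range k, (1 - p ^ (k + j - i)) =
      (∏ i ∈ range k, (1 - p ^ (k + j + 1 - i))) * (1 - p ^ (j + 1)) := by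
  calc _ = ∏ i ∈ range (k + 1), (1 - p ^ (k + j + 1 - i)) := by
        rw [prod_range_succ', mul_comm, Nat.sub_zero]
        simp only [Nat.add_sub_add_right]
    _ = _ := by rw [prod_range_succ, show k + j + 1 - k = j + 1 by omega]

lemma jackson_prod_Ico_shift (s N : ℕ) (hs : s ≤ 2 * N) :
    (1 - a * p ^ (2 * N + 1)) * (1 - a * p ^ (2 * N + 2)) *
        ∏ i ∈ Ico s (2 * N), (1 - a * p ^ (i + 1)) =
      (1 - a * p ^ (s + 1)) * ∏ i ∈ Ico (s + 1) (2 * (N + 1)), (1 - a * p ^ (i + 1)) := by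
  rw [← prod_eq_prod_Ico_succ_bot (by omega) fun i ↦ 1 - a * p ^ (i + 1),
    show 2 * (N + 1) = 2 * N + 1 + 1 by ring, prod_Ico_succ_top (by omega), prod_Ico_succ_top hs]
  ring

lemma jacksonTerm_succ (ha : a = L * b * c * d) {N k : ℕ} (hk : k ≤ N) :
    jacksonTerm a b c d L p (N + 1) k =
      jacksonRatio a b c d L p N * jacksonTerm a b c d L p N k +
        (jacksonCert a b c d L p N (k + 1) - jacksonCert a b c d L p N k) := by
  obtain ⟨j, rfl⟩ := Nat.exists_eq_add_of_le hk
  have low := jackson_prod_shift p k j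
  have high := jackson_prod_Ico_shift p (a := a) (k + j + k) (k + j) (by omega)
  have tail : ∏ i ∈ Ico (k + 1) (k + j + 1), jacksonDen b c d L (p ^ i) =
      ∏ i ∈ Ico k (k + j), jacksonDen b c d L (p ^ (i + 1)) :=
    (prod_Ico_add' (fun i ↦ jacksonDen b c d L (p ^ i)) _ _ _).symm
  have key := jackson_certificate_identity ha (p ^ k) (p ^ (j + 1))
  rw [← pow_add, ← add_assoc] at key
  unfold jacksonTerm jacksonCert jacksonRatio
  rw [prod_Ico_succ_top (by omega), prod_eq_prod_Ico_succ_bot (show k < k + j + 1 by omega), tail,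
    prod_range_succ _ k, prod_range_succ _ k,
    prod_eq_prod_Ico_succ_bot (show k + j + k < 2 * (k + j + 1) by omega),
    show k + j - k = j by omega, show k + j + 1 - (k + 1) = j by omega,
    show k + j + 1 - k = j + 1 by omega, show k + j + 1 + k = k + j + k + 1 by omega,
    ← add_assoc (k + j) k 1, shiftedFact_succ _ _ j, shiftedFact_succ _ _ (k + j + k)]
  set Z := (L * p) ^ k * (∏ i ∈ range k, jacksonNum a b c d (p ^ i)) *
    (∏ i ∈ Ico k (k + j), jacksonDen b c d L (p ^ (i + 1))) *
    shiftedFact (L * p) p j * shiftedFact (a * L * p) p (k + j + k)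
  set V := (1 - a * p ^ (2 * k)) * (1 - a * L * p ^ (k + j + 1)) *
    (1 - L * d * p ^ (k + j + 1)) * (1 - L * c * p ^ (k + j + 1)) * (1 - L * b * p ^ (k + j + 1))
  linear_combination
    (Z * (∏ i ∈ range k, (1 - p ^ (k + j + 1 - i))) *
      ∏ i ∈ Ico (k + j + k + 1) (2 * (k + j + 1)), (1 - a * p ^ (i + 1))) * key -
    (Z * V * (1 - a * p ^ (2 * (k + j) + 1)) * (1 - a * p ^ (2 * (k + j) + 2)) *
      ∏ i ∈ Ico (k + j + k) (2 * (k + j)), (1 - a * p ^ (i + 1))) * low -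
    (Z * V * (1 - p ^ (j + 1)) * ∏ i ∈ range k, (1 - p ^ (k + j + 1 - i))) * high

lemma jacksonCert_zero (N : ℕ) : jacksonCert a b c d L p N 0 = 0 := by
  have h : ∏ i ∈ Ico 0 (N + 1), jacksonDen b c d L (p ^ i) = 0 :=
    prod_eq_zero (i := 0) (by simp) (by simp [jacksonDen])
  simp only [jacksonCert, h, mul_zero, zero_mul]

lemma jacksonTerm_self_eq_neg_jacksonCert (N : ℕ) :
    jacksonTerm a b c d L p (N + 1) (N + 1) = -jacksonCert a b c d L p N (N + 1) := by
  unfold jacksonTerm jacksonCert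
  rw [show 2 * (N + 1) = N + (N + 1) + 1 by ring, show N + 1 + (N + 1) = N + (N + 1) + 1 by ring,
    shiftedFact_succ _ _ (N + (N + 1)), Nat.Ico_succ_singleton, prod_singleton]
  simp only [Ico_self, prod_empty, Nat.sub_self]
  ring

theorem sum_jacksonTerm (ha : a = L * b * c * d) (N : ℕ) :
    ∑ k ∈ range (N + 1), jacksonTerm a b c d L p N k =
      (1 - a) * shiftedFact p p N * shiftedFact (a * p) p (2 * N) *
        shiftedFact (a * L * p) p N * shiftedFact (L * d * p) p N *
        shiftedFact (L * c * p) p N * shiftedFact (L * b * p) p N := by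
  induction N with
  | zero => simp [jacksonTerm, shiftedFact]
  | succ N ih =>
    have telescope : ∑ k ∈ range (N + 1), jacksonTerm a b c d L p (N + 1) k =
        jacksonRatio a b c d L p N * ∑ k ∈ range (N + 1), jacksonTerm a b c d L p N k +
          jacksonCert a b c d L p N (N + 1) := by
      rw [sum_congr rfl fun k hk ↦ jacksonTerm_succ p ha (mem_range_succ_iff.1 hk),
        sum_add_distrib, ← mul_sum, sum_range_sub, jacksonCert_zero, sub_zero]
    rw [sum_range_succ, telescope, jacksonTerm_self_eq_neg_jacksonCert, ih,
      show 2 * (N + 1) = 2 * N + 1 + 1 by ring]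
    simp only [shiftedFact_succ, jacksonRatio]
    ring

end Jackson

section VeryWellPoised

variable {A B : Type*} [CommRing A] [CommRing B] (a p : A) (x : Fin 5 → Aˣ)

/-- The `i`-th numerator factor of the very-well-poised series with parameters
`a, x₀ a, …, x₄ a`. -/
def wpNum (i : ℕ) : A :=
  (1 - a * p ^ i) * ∏ j, (1 - x j * a * p ^ i)

/-- The `i`-th denominator factor of the very-well-poised series with parameters
`a, x₀ a, …, x₄ a`. -/
def wpDen (i : ℕ) : A :=
  (1 - p ^ (i + 1)) * ∏ j, (1 - ((x j)⁻¹ : Aˣ) * p ^ (i + 1))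

/-- The `k`-th summand of the very-well-poised series with parameters `a, x₀ a, …, x₄ a` in base
`p`, cleared of the denominators occurring up to index `m`. -/
def wpTerm (m k : ℕ) : A :=
  (1 - a * p ^ (2 * k)) * p ^ k * (∏ i ∈ range k, wpNum a p x i) * ∏ i ∈ Ico k m, wpDen p x i

/-- The very-well-poised series with parameters `a, x₀ a, …, x₄ a` in base `p`, truncated after
index `m` and cleared of denominators. -/
def wpSum (m : ℕ) : A :=
  ∑ k ∈ range (m + 1), wpTerm a p x m k

lemma map_wpSum (f : A →+* B) (m : ℕ) :
    f (wpSum a p x m) = wpSum (f a) (f p) (fun j ↦ Units.map (f : A →* B) (x j)) m := by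
  simp only [wpSum, wpTerm, wpNum, wpDen, map_sum, map_mul, map_prod, map_sub, map_one, map_pow,
    ← map_inv, Units.coe_map, MonoidHom.coe_coe]

lemma wpSum_comp_perm (σ : Equiv.Perm (Fin 5)) (m : ℕ) : wpSum a p (x ∘ σ) m = wpSum a p x m := by
  have num (i : ℕ) : wpNum a p (x ∘ σ) i = wpNum a p x i :=
    congrArg _ (Equiv.prod_comp σ fun j ↦ 1 - (x j : A) * a * p ^ i)
  have den (i : ℕ) : wpDen p (x ∘ σ) i = wpDen p x i :=
    congrArg _ (Equiv.prod_comp σ fun j ↦ 1 - ((x j)⁻¹ : Aˣ) * p ^ (i + 1))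
  simp only [wpSum, wpTerm, num, den]

lemma wpNum_one (i : ℕ) : wpNum a p 1 i = (1 - a * p ^ i) ^ 6 := by
  simp [wpNum, ← pow_succ']

lemma wpDen_one (i : ℕ) : wpDen p 1 i = (1 - p ^ (i + 1)) ^ 6 := by
  simp [wpDen, ← pow_succ']

lemma dvd_wpSum_sub_wpSum_mul {e : A} {m M : ℕ} (hmM : m ≤ M) (he : e ∣ wpNum a p x m) :
    e ∣ wpSum a p x M - wpSum a p x m * ∏ i ∈ Ico m M, wpDen p x i := by
  have head : ∑ k ∈ range (m + 1), wpTerm a p x M k =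
      wpSum a p x m * ∏ i ∈ Ico m M, wpDen p x i := by
    rw [wpSum, sum_mul]
    refine sum_congr rfl fun k hk ↦ ?_
    rw [wpTerm, wpTerm, mul_assoc _ (∏ i ∈ Ico k m, _),
      prod_Ico_consecutive _ (mem_range_succ_iff.1 hk) hmM]
  rw [← head, wpSum, ← sum_range_add_sum_Ico _ (Nat.succ_le_succ hmM), add_sub_cancel_left]
  refine dvd_sum fun k hk ↦ ?_
  have hm : m ∈ range k := mem_range.2 (mem_Ico.1 hk).1
  exact ((he.trans (dvd_prod_of_mem _ hm)).mul_left _).mul_right _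

variable {a p x} {L : A} {m : ℕ}

lemma wpNum_eq_jacksonNum_mul (i : ℕ) :
    wpNum a p x i = jacksonNum a (a * x 0) (a * x 1) (a * x 2) (p ^ i) *
      (1 - a * x 3 * p ^ i) * (1 - a * x 4 * p ^ i) := by
  rw [wpNum, jacksonNum, Fin.prod_univ_five]
  ring

lemma wpDen_eq_jacksonDen_mul (hL : L * a ^ 2 * x 0 * x 1 * x 2 = 1) (i : ℕ) :
    wpDen p x i = jacksonDen (a * x 0) (a * x 1) (a * x 2) L (p ^ (i + 1)) *
      (1 - ((x 3)⁻¹ : Aˣ) * p ^ (i + 1)) * (1 - ((x 4)⁻¹ : Aˣ) * p ^ (i + 1)) := by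
  have inv0 : ((x 0)⁻¹ : Aˣ) = L * (a * x 1) * (a * x 2) :=
    Units.mul_eq_one_iff_inv_eq.1 (by linear_combination hL)
  have inv1 : ((x 1)⁻¹ : Aˣ) = L * (a * x 0) * (a * x 2) :=
    Units.mul_eq_one_iff_inv_eq.1 (by linear_combination hL)
  have inv2 : ((x 2)⁻¹ : Aˣ) = L * (a * x 0) * (a * x 1) :=
    Units.mul_eq_one_iff_inv_eq.1 (by linear_combination hL)
  rw [wpDen, jacksonDen, Fin.prod_univ_five, inv0, inv1, inv2]
  ring

lemma shiftedFact_mul_sub (h3 : L * p ^ (m + 1) = x 3) {k : ℕ} (hk : k ≤ m) :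
    shiftedFact (L * p) p (m - k) =
      ∏ i ∈ Ico k m, -(L * p ^ (m - i)) * (1 - ((x 3)⁻¹ : Aˣ) * p ^ (i + 1)) := by
  rw [shiftedFact, ← prod_range_reflect, prod_Ico_eq_prod_range]
  refine prod_congr rfl fun i hi ↦ ?_
  have hi := mem_range.1 hi
  have hx : L * p ^ (m - (k + i)) * p ^ (k + i + 1) = x 3 := by
    rw [mul_assoc, ← pow_add, ← h3, show m - (k + i) + (k + i + 1) = m + 1 by omega]
  rw [mul_assoc L, ← pow_succ', show m - k - 1 - i + 1 = m - (k + i) by omega]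
  linear_combination -((x 3)⁻¹ : Aˣ) * hx - (x 3).mul_inv

lemma jacksonTerm_eq_wpTerm (h4 : a * x 4 * p ^ m = 1) (h3 : L * p ^ (m + 1) = x 3)
    (hL : L * a ^ 2 * x 0 * x 1 * x 2 = 1) {k : ℕ} (hk : k ≤ m) :
    jacksonTerm a (a * x 0) (a * x 1) (a * x 2) L p m k =
      shiftedFact (a * L * p) p m * (∏ i ∈ range m, -(L * p ^ (m - i))) * wpTerm a p x m k := by
  have inv4 : ((x 4)⁻¹ : Aˣ) = a * p ^ m :=
    Units.mul_eq_one_iff_inv_eq.1 (by linear_combination h4)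
  have fact_add : shiftedFact (a * L * p) p (m + k) =
      shiftedFact (a * L * p) p m * ∏ i ∈ range k, (1 - a * x 3 * p ^ i) := by
    rw [shiftedFact_add, show a * L * p * p ^ m = a * x 3 by rw [← h3]; ring]
    rfl
  have low : L ^ k * ∏ i ∈ range k, (1 - p ^ (m - i)) =
      ∏ i ∈ range k, -(L * p ^ (m - i)) * (1 - a * x 4 * p ^ i) := by
    rw [← card_range k, ← prod_const, card_range, ← prod_mul_distrib]
    refine prod_congr rfl fun i hi ↦ ?_
    rw [← Nat.sub_add_cancel ((mem_range.1 hi).le.trans hk), pow_add] at h4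
    linear_combination -L * h4
  have high : ∏ i ∈ Ico (m + k) (2 * m), (1 - a * p ^ (i + 1)) =
      ∏ i ∈ Ico k m, (1 - ((x 4)⁻¹ : Aˣ) * p ^ (i + 1)) := by
    rw [two_mul, add_comm m k, ← prod_Ico_add']
    refine prod_congr rfl fun i _ ↦ ?_
    rw [inv4]
    ring
  rw [jacksonTerm, wpTerm, ← prod_range_mul_prod_Ico _ hk, shiftedFact_mul_sub h3 hk, fact_add,
    high]
  simp only [wpNum_eq_jacksonNum_mul, wpDen_eq_jacksonDen_mul hL, prod_mul_distrib] at low ⊢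
  rw [mul_pow]
  linear_combination (1 - a * p ^ (2 * k)) * p ^ k *
    (∏ i ∈ range k, jacksonNum a (a * x 0) (a * x 1) (a * x 2) (p ^ i)) *
    (∏ i ∈ Ico k m, jacksonDen (a * x 0) (a * x 1) (a * x 2) L (p ^ (i + 1))) *
    shiftedFact (a * L * p) p m * (∏ i ∈ range k, (1 - a * x 3 * p ^ i)) *
    (∏ i ∈ Ico k m, -(L * p ^ (m - i))) *
    (∏ i ∈ Ico k m, (1 - ((x 3)⁻¹ : Aˣ) * p ^ (i + 1))) *
    (∏ i ∈ Ico k m, (1 - ((x 4)⁻¹ : Aˣ) * p ^ (i + 1))) * low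

theorem wpSum_jackson [IsDomain A] (h4 : a * x 4 * p ^ m = 1) (h3 : L * p ^ (m + 1) = x 3)
    (hL : L * a ^ 2 * x 0 * x 1 * x 2 = 1) (h0 : shiftedFact (a * L * p) p m ≠ 0) :
    (∏ i ∈ range m, -(L * p ^ (m - i))) * wpSum a p x m =
      shiftedFact p p m * shiftedFact a p (2 * m + 1) * shiftedFact (a * x 0 * L * p) p m *
        shiftedFact (a * x 1 * L * p) p m * shiftedFact (a * x 2 * L * p) p m := by
  have base : shiftedFact a p (2 * m + 1) = (1 - a) * shiftedFact (a * p) p (2 * m) := by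
    rw [add_comm, shiftedFact_add, pow_one]
    simp [shiftedFact]
  have jackson := sum_jacksonTerm p (a := a) (b := a * x 0) (c := a * x 1) (d := a * x 2) (L := L)
    (by linear_combination -a * hL) m
  rw [sum_congr rfl fun k hk ↦ jacksonTerm_eq_wpTerm h4 h3 hL (mem_range_succ_iff.1 hk),
    ← mul_sum, ← wpSum] at jackson
  refine mul_left_cancel₀ h0 ?_
  rw [base, ← mul_assoc, jackson, mul_comm L, mul_comm L, mul_comm L]
  ring

end VeryWellPoised

section SymmetricProduct

variable {A B : Type*} [CommRing A] [CommRing B] (p : Aˣ)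

/-- The symmetric product of the factors `1 - z * p ^ i` over `0 < |i| ≤ h`. -/
def symProd (z : A) (h : ℕ) : A :=
  ∏ i ∈ range h, (1 - z * (p : A) ^ (i + 1)) * (1 - z * ((p⁻¹ : Aˣ) : A) ^ (i + 1))

lemma symProd_succ (z : A) (h : ℕ) :
    symProd p z (h + 1) = symProd p z h *
      ((1 - z * (p : A) ^ (h + 1)) * (1 - z * ((p⁻¹ : Aˣ) : A) ^ (h + 1))) :=
  prod_range_succ _ _

lemma map_symProd (f : A →+* B) (z : A) (h : ℕ) :
    f (symProd p z h) = symProd (Units.map (f : A →* B) p) (f z) h := by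
  simp only [symProd, map_prod, map_mul, map_sub, map_one, map_pow, ← map_inv, Units.coe_map,
    MonoidHom.coe_coe]

lemma shiftedFact_eq_symProd (z : A) (h : ℕ) :
    shiftedFact (z * ((p⁻¹ : Aˣ) : A) ^ h) p (2 * h + 1) = (1 - z) * symProd p z h := by
  induction h with
  | zero => simp [shiftedFact, symProd]
  | succ h ih =>
    have hp : ((p⁻¹ : Aˣ) : A) * p = 1 := p.inv_mul
    have shift : z * ((p⁻¹ : Aˣ) : A) ^ (h + 1) * p ^ 1 = z * ((p⁻¹ : Aˣ) : A) ^ h := by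
      linear_combination z * ((p⁻¹ : Aˣ) : A) ^ h * hp
    have last : ((p⁻¹ : Aˣ) : A) ^ h * p ^ h = 1 := by rw [← mul_pow, hp, one_pow]
    rw [show 2 * (h + 1) + 1 = 1 + (2 * h + 1 + 1) by ring, shiftedFact_add, shift,
      shiftedFact_succ _ _ (2 * h + 1), ih, symProd_succ, shiftedFact, prod_range_one]
    linear_combination (1 - z * ((p⁻¹ : Aˣ) : A) ^ (h + 1)) * (1 - z) * symProd p z h *
      -(z * p ^ (h + 1)) * last

lemma symProd_one (h : ℕ) :
    symProd p 1 h = shiftedFact (p : A) p h ^ 2 * ∏ i ∈ range h, -((p⁻¹ : Aˣ) : A) ^ (i + 1) := by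
  rw [symProd, shiftedFact, ← prod_pow, ← prod_mul_distrib]
  refine prod_congr rfl fun i _ ↦ ?_
  have hp : ((p⁻¹ : Aˣ) : A) ^ (i + 1) * p ^ (i + 1) = 1 := by
    rw [← mul_pow, p.inv_mul, one_pow]
  linear_combination ((p : A) ^ (i + 1) - 1) * hp

variable {p} in
lemma sq_dvd_symProd_sub {e z : A} (he : e ∣ 1 - z) (h : ℕ) :
    e ^ 2 ∣ symProd p z h - z ^ h * symProd p 1 h := by
  induction h with
  | zero => simp [symProd]
  | succ h ih =>
    have hp : (p : A) ^ (h + 1) * ((p⁻¹ : Aˣ) : A) ^ (h + 1) = 1 := by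
      rw [← mul_pow, p.mul_inv, one_pow]
    have factor : (1 - z * (p : A) ^ (h + 1)) * (1 - z * ((p⁻¹ : Aˣ) : A) ^ (h + 1)) =
        z * ((1 - 1 * (p : A) ^ (h + 1)) * (1 - 1 * ((p⁻¹ : Aˣ) : A) ^ (h + 1))) + (1 - z) ^ 2 := by
      linear_combination (z ^ 2 - z) * hp
    have expand : symProd p z (h + 1) - z ^ (h + 1) * symProd p 1 (h + 1) =
        (symProd p z h - z ^ h * symProd p 1 h) * (z *
          ((1 - 1 * (p : A) ^ (h + 1)) * (1 - 1 * ((p⁻¹ : Aˣ) : A) ^ (h + 1)))) +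
          symProd p z h * (1 - z) ^ 2 := by
      rw [symProd_succ, symProd_succ, factor]
      ring
    rw [expand]
    exact dvd_add (ih.mul_right _) ((pow_dvd_pow_of_dvd he 2).mul_left _)

end SymmetricProduct

section Defect

variable {A B : Type*} [CommRing A] [CommRing B] (a : Aˣ) (x : Fin 5 → Aˣ) (h : ℕ)

/-- The parameter-dependent factor of the value of Jackson's sum when one of the `x j` equals
`(a ^ (3 * h + 2))⁻¹ ^ 2`, written symmetrically in the parameters. -/
def jacksonWeight : A :=
  ∑ j, ((x j)⁻¹ : Aˣ).val - (a⁻¹ ^ (3 * h + 2) : Aˣ) * ∑ j, (x j).val +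
    (a⁻¹ ^ (3 * h + 2) : Aˣ).val ^ 3 - (a ^ (3 * h + 2) : Aˣ).val ^ 2

/-- The parameter-free factor of the value of Jackson's sum, to leading order at
`a ^ (3 * h + 2) = 1`. -/
def jacksonConst : A :=
  shiftedFact (a ^ 3 : Aˣ).val (a ^ 3 : Aˣ) (2 * h + 1) ^ 3 *
    (1 - (a ^ (3 * h + 2) : Aˣ).val ^ 2) * (a ^ (3 * h + 2) : Aˣ).val ^ (3 * h + 2) *
    symProd (a ^ 3) 1 h ^ 3

/-- The deviation, from the leading term of Jackson's sum, of the very-well-poised series in base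
`a ^ 3` with parameters `a, x₀ a, …, x₄ a`. -/
def defect : A :=
  wpSum a.val (a ^ 3 : Aˣ) x (2 * h + 1) - jacksonConst a h * jacksonWeight a x h

lemma map_defect (f : A →+* B) :
    f (defect a x h) =
      defect (Units.map (f : A →* B) a) (fun j ↦ Units.map (f : A →* B) (x j)) h := by
  have coe (u : Aˣ) : f u = Units.map (f : A →* B) u := rfl
  simp only [defect, jacksonConst, jacksonWeight, map_sub, map_add, map_mul, map_pow, map_sum,
    map_one, map_inv, map_wpSum, map_shiftedFact, map_symProd, coe]

lemma defect_comp_perm (σ : Equiv.Perm (Fin 5)) : defect a (x ∘ σ) h = defect a x h := by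
  have weight : jacksonWeight a (x ∘ σ) h = jacksonWeight a x h := by
    simp only [jacksonWeight, Function.comp_apply, Equiv.sum_comp σ fun j ↦ (x j).val,
      Equiv.sum_comp σ fun j ↦ ((x j)⁻¹ : Aˣ).val]
  rw [defect, defect, weight, wpSum_comp_perm]

variable {a x h}

lemma mul_jacksonWeight (hx : ∏ j, x j = 1) (h4 : x 4 = (a⁻¹ ^ (3 * h + 2)) ^ 2) :
    x 3 * jacksonWeight a x h =
      (1 - x 0 * x 3 * (a⁻¹ ^ (3 * h + 2) : Aˣ).val) *
        (1 - x 1 * x 3 * (a⁻¹ ^ (3 * h + 2) : Aˣ).val) *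
        (1 - x 2 * x 3 * (a⁻¹ ^ (3 * h + 2) : Aˣ).val) := by
  have hprod : (x 0 * x 1 * x 2 * x 3 * x 4 : A) = 1 := by
    simpa [Fin.prod_univ_five] using congrArg Units.val hx
  have inv0 : ((x 0)⁻¹ : Aˣ) = (x 1 * x 2 * x 3 * x 4 : A) :=
    Units.mul_eq_one_iff_inv_eq.1 (by linear_combination hprod)
  have inv1 : ((x 1)⁻¹ : Aˣ) = (x 0 * x 2 * x 3 * x 4 : A) :=
    Units.mul_eq_one_iff_inv_eq.1 (by linear_combination hprod)
  have inv2 : ((x 2)⁻¹ : Aˣ) = (x 0 * x 1 * x 3 * x 4 : A) :=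
    Units.mul_eq_one_iff_inv_eq.1 (by linear_combination hprod)
  have inv3 : ((x 3)⁻¹ : Aˣ) = (x 0 * x 1 * x 2 * x 4 : A) :=
    Units.mul_eq_one_iff_inv_eq.1 (by linear_combination hprod)
  have inv4 : ((x 4)⁻¹ : Aˣ) = (a ^ (3 * h + 2) : Aˣ).val ^ 2 := by
    rw [h4, ← Units.val_pow_eq_pow_val, inv_pow, inv_pow, inv_inv]
  have x4 : (x 4 : A) = (a⁻¹ ^ (3 * h + 2) : Aˣ).val ^ 2 := by rw [h4, Units.val_pow_eq_pow_val]
  simp only [jacksonWeight, Fin.sum_univ_five]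
  rw [inv0, inv1, inv2, inv3, inv4]
  rw [x4] at hprod ⊢
  generalize (a⁻¹ ^ (3 * h + 2) : Aˣ).val = W at *
  linear_combination (1 + x 3 ^ 2 * W) * hprod

lemma prod_neg_mul_pow_sub (p y L : Aˣ) {m : ℕ} (hL : L * p ^ (m + 1) = y) :
    ∏ i ∈ range m, -((L : A) * (p : A) ^ (m - i)) =
      y ^ m * ∏ i ∈ range m, -(p⁻¹ : Aˣ).val ^ (i + 1) := by
  rw [← card_range m, ← prod_const, card_range, ← prod_mul_distrib]
  refine prod_congr rfl fun i hi ↦ ?_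
  have split : L * p ^ (m - i) = y * p⁻¹ ^ (i + 1) := by
    rw [← hL, show m + 1 = m - i + (i + 1) by grind, pow_add, inv_pow]
    group
  rw [mul_neg]
  exact congrArg Neg.neg (mod_cast split)

lemma wpSum_mul_eq_symProd [IsDomain A] (hx : ∏ j, x j = 1) (h4 : x 4 = (a⁻¹ ^ (3 * h + 2)) ^ 2)
    (hne : ∀ i < 2 * h + 1, x 3 * a ^ (3 * i) ≠ a ^ (6 * h + 2)) :
    x 3 ^ (2 * h + 1) * (∏ i ∈ range (2 * h + 1), -((a ^ 3)⁻¹ : Aˣ).val ^ (i + 1)) *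
        wpSum a.val (a ^ 3 : Aˣ) x (2 * h + 1) =
      shiftedFact (a ^ 3 : Aˣ).val (a ^ 3 : Aˣ) (2 * h + 1) *
        ((1 - (a ^ (3 * h + 2) : Aˣ).val ^ 2) *
          symProd (a ^ 3) ((a ^ (3 * h + 2) : Aˣ).val ^ 2) (2 * h + 1)) *
        ∏ j ∈ {0, 1, 2}, ((1 - (x j * x 3 * a⁻¹ ^ (3 * h + 2) : Aˣ).val) *
          symProd (a ^ 3) (x j * x 3 * a⁻¹ ^ (3 * h + 2) : Aˣ).val h) := by
  set L : Aˣ := x 3 * (a ^ 3)⁻¹ ^ (2 * h + 2) with hL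
  have terminating : a * x 4 * (a ^ 3) ^ (2 * h + 1) = 1 := by
    rw [h4]; group
  have last : L * (a ^ 3) ^ (2 * h + 1 + 1) = x 3 := by
    rw [hL]; group
  have balanced : L * a ^ 2 * x 0 * x 1 * x 2 = 1 := by
    have hLa : L * a ^ 2 = x 3 * x 4 := by rw [h4, hL]; group
    rw [hLa, ← hx, Fin.prod_univ_five]
    ac_rfl
  have shift : a * L * a ^ 3 = x 3 * (a⁻¹ ^ (3 * h + 2) * (a ^ 3)⁻¹ ^ h) := by
    rw [hL, mul_left_comm, mul_assoc (x 3)]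
    group
  have nonzero : shiftedFact (a * L * (a ^ 3 : Aˣ) : A) (a ^ 3 : Aˣ) (2 * h + 1) ≠ 0 := by
    refine prod_ne_zero_iff.2 fun i hi hzero ↦ hne i (mem_range.1 hi) ?_
    have hone : a * L * a ^ 3 * (a ^ 3) ^ i = 1 :=
      Units.val_eq_one.1 (mod_cast (sub_eq_zero.1 hzero).symm)
    rw [← one_mul (a ^ (6 * h + 2)), ← hone, shift, mul_assoc, mul_assoc]
    group
  have first : (a : A) = (a ^ (3 * h + 2) : Aˣ).val ^ 2 * ((a ^ 3)⁻¹ : Aˣ).val ^ (2 * h + 1) :=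
    mod_cast show a = (a ^ (3 * h + 2)) ^ 2 * (a ^ 3)⁻¹ ^ (2 * h + 1) by group
  have factor_units (j : Fin 5) :
      a * x j * L * a ^ 3 = x j * x 3 * a⁻¹ ^ (3 * h + 2) * (a ^ 3)⁻¹ ^ h := by
    rw [mul_right_comm a, mul_right_comm _ (x j), shift]
    ac_rfl
  have factor (j : Fin 5) : (a * x j * L * (a ^ 3 : Aˣ) : A) =
      (x j * x 3 * a⁻¹ ^ (3 * h + 2) : Aˣ).val * ((a ^ 3)⁻¹ : Aˣ).val ^ h :=
    mod_cast congrArg Units.val (factor_units j)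
  have jackson := wpSum_jackson (mod_cast Units.val_eq_one.2 terminating) (mod_cast last)
    (mod_cast Units.val_eq_one.2 balanced) nonzero
  have centred := shiftedFact_eq_symProd (a ^ 3) ((a ^ (3 * h + 2) : Aˣ).val ^ 2) (2 * h + 1)
  rw [← first] at centred
  simp only [prod_neg_mul_pow_sub _ _ _ last, centred, factor, shiftedFact_eq_symProd] at jackson
  rw [jackson, prod_insert (by decide), prod_insert (by decide), prod_singleton]
  ring

lemma dvd_one_sub_mul {e : A} {u v : Aˣ} (hu : e ∣ 1 - u.val) (hv : e ∣ 1 - v.val) :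
    e ∣ 1 - (u * v : Aˣ).val := by
  rw [Units.val_mul, show 1 - (u * v : A) = (1 - u) + u * (1 - v) by ring]
  exact dvd_add hu (hv.mul_left _)

lemma dvd_one_sub_inv {e : A} {u : Aˣ} (hu : e ∣ 1 - u.val) : e ∣ 1 - (u⁻¹ : Aˣ).val := by
  rw [show 1 - (u⁻¹ : Aˣ).val = -(u⁻¹ : Aˣ).val * (1 - u) by linear_combination -u.inv_mul]
  exact hu.mul_left _

lemma mul_jacksonConst_mul_jacksonWeight (hx : ∏ j, x j = 1)
    (h4 : x 4 = (a⁻¹ ^ (3 * h + 2)) ^ 2) :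
    x 3 ^ (2 * h + 1) * (∏ i ∈ range (2 * h + 1), -((a ^ 3)⁻¹ : Aˣ).val ^ (i + 1)) *
        (jacksonConst a h * jacksonWeight a x h) =
      shiftedFact (a ^ 3 : Aˣ).val (a ^ 3 : Aˣ) (2 * h + 1) *
        ((1 - (a ^ (3 * h + 2) : Aˣ).val ^ 2) *
          (((a ^ (3 * h + 2) : Aˣ).val ^ 2) ^ (2 * h + 1) * symProd (a ^ 3) 1 (2 * h + 1))) *
        ∏ j ∈ {0, 1, 2}, ((1 - (x j * x 3 * a⁻¹ ^ (3 * h + 2) : Aˣ).val) *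
          ((x j * x 3 * a⁻¹ ^ (3 * h + 2) : Aˣ).val ^ h * symProd (a ^ 3) 1 h)) := by
  set Q : A := (a ^ (3 * h + 2) : Aˣ).val with hQ
  have hz : x 0 * x 3 * a⁻¹ ^ (3 * h + 2) * (x 1 * x 3 * a⁻¹ ^ (3 * h + 2)) *
      (x 2 * x 3 * a⁻¹ ^ (3 * h + 2)) * a ^ (3 * h + 2) = x 3 ^ 2 := by
    have cancel : (a⁻¹ : Aˣ) ^ (3 * h + 2) * a ^ (3 * h + 2) = 1 := by group
    rw [Fin.prod_univ_five, h4] at hx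
    generalize (a⁻¹ : Aˣ) ^ (3 * h + 2) = W, a ^ (3 * h + 2) = V at hx cancel
    calc _ = x 0 * x 1 * x 2 * x 3 * W ^ 2 * (W * V) * x 3 ^ 2 := by simp only [sq]; ac_rfl
      _ = x 3 ^ 2 := by rw [hx, cancel, one_mul, one_mul]
  have power : Q ^ h * ∏ j ∈ {0, 1, 2}, (x j * x 3 * a⁻¹ ^ (3 * h + 2) : Aˣ).val ^ h =
      (x 3 : A) ^ (2 * h) := by
    rw [prod_pow, prod_insert (by decide), prod_insert (by decide), prod_singleton, pow_mul,
      ← mul_pow, mul_comm, ← mul_assoc]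
    exact mod_cast congrArg (· ^ h) (congrArg Units.val hz)
  have weight := mul_jacksonWeight hx h4
  simp only [← Units.val_mul] at weight
  rw [jacksonConst, symProd_one (a ^ 3) (2 * h + 1)]
  simp only [prod_insert (show (0 : Fin 5) ∉ {1, 2} by decide),
    prod_insert (show (1 : Fin 5) ∉ {2} by decide), prod_singleton] at power ⊢
  generalize shiftedFact (a ^ 3 : Aˣ).val (a ^ 3 : Aˣ) (2 * h + 1) = F,
    ∏ i ∈ range (2 * h + 1), -((a ^ 3)⁻¹ : Aˣ).val ^ (i + 1) = R, symProd (a ^ 3) 1 h = S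
  linear_combination R * F ^ 3 * (1 - Q ^ 2) * Q ^ (3 * h + 2) * S ^ 3 * (x 3 ^ (2 * h) * weight -
    (1 - (x 0 * x 3 * a⁻¹ ^ (3 * h + 2) : Aˣ).val) *
      (1 - (x 1 * x 3 * a⁻¹ ^ (3 * h + 2) : Aˣ).val) *
      (1 - (x 2 * x 3 * a⁻¹ ^ (3 * h + 2) : Aˣ).val) * power)

/- Since `1 - Q ^ 2` and the three factors `1 - x j * x 3 / Q`, where `Q = a ^ (3 * h + 2)`, vanish
modulo `e`, the symmetric products are only needed modulo `e ^ 2`. -/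
lemma pow_six_dvd_defect_of_eq_last [IsDomain A] (hx : ∏ j, x j = 1)
    (h4 : x 4 = (a⁻¹ ^ (3 * h + 2)) ^ 2)
    (hne : ∀ i < 2 * h + 1, x 3 * a ^ (3 * i) ≠ a ^ (6 * h + 2)) {e : A}
    (ha : e ∣ 1 - (a ^ (3 * h + 2) : Aˣ).val) (he : ∀ j, e ∣ 1 - (x j).val) :
    e ^ 6 ∣ defect a x h := by
  have hQ : e ∣ 1 - (a ^ (3 * h + 2) : Aˣ).val ^ 2 := by
    rw [sq, ← Units.val_mul]
    exact dvd_one_sub_mul ha ha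
  have hz (j : Fin 5) : e ∣ 1 - (x j * x 3 * a⁻¹ ^ (3 * h + 2) : Aˣ).val :=
    dvd_one_sub_mul (dvd_one_sub_mul (he j) (he 3)) (inv_pow a _ ▸ dvd_one_sub_inv ha)
  have unit : IsUnit
      (x 3 ^ (2 * h + 1) * ∏ i ∈ range (2 * h + 1), -((a ^ 3)⁻¹ : Aˣ).val ^ (i + 1) : A) :=
    ((x 3).isUnit.pow _).mul <| IsUnit.prod_iff.2 fun _ _ ↦ (((a ^ 3)⁻¹).isUnit.pow _).neg
  rw [← unit.dvd_mul_left, defect, mul_sub, wpSum_mul_eq_symProd hx h4 hne,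
    mul_jacksonConst_mul_jacksonWeight hx h4]
  set Q : A := (a ^ (3 * h + 2) : Aˣ).val
  set z : Fin 5 → A := fun j ↦ (x j * x 3 * a⁻¹ ^ (3 * h + 2) : Aˣ).val
  have low : e ^ 4 ∣ (1 - Q ^ 2) * ∏ j ∈ {0, 1, 2}, (1 - z j) := by
    rw [pow_succ' e 3]
    exact mul_dvd_mul hQ (prod_const e (s := {0, 1, 2}) ▸ prod_dvd_prod_of_dvd _ _ fun j _ ↦ hz j)
  have high : e ^ 2 ∣
      symProd (a ^ 3) (Q ^ 2) (2 * h + 1) * ∏ j ∈ {0, 1, 2}, symProd (a ^ 3) (z j) h -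
        (Q ^ 2) ^ (2 * h + 1) * symProd (a ^ 3) 1 (2 * h + 1) *
          ∏ j ∈ {0, 1, 2}, (z j ^ h * symProd (a ^ 3) 1 h) := by
    simp only [← Ideal.mem_span_singleton, ← SModEq.sub_mem]
    refine SModEq.mul ?_ (SModEq.prod fun j _ ↦ ?_) <;>
      rw [SModEq.sub_mem, Ideal.mem_span_singleton] <;>
      exact sq_dvd_symProd_sub (by solve_by_elim) _
  simp only [prod_mul_distrib]
  convert (mul_dvd_mul low high).mul_left
    (shiftedFact (a ^ 3 : Aˣ).val (a ^ 3 : Aˣ) (2 * h + 1)) using 1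
  · ring
  · simp only [prod_mul_distrib]
    ring

theorem pow_six_dvd_defect [IsDomain A] (hx : ∏ j, x j = 1) {j : Fin 5}
    (hj : x j = (a⁻¹ ^ (3 * h + 2)) ^ 2)
    (hne : ∀ k ≠ j, ∀ i < 2 * h + 1, x k * a ^ (3 * i) ≠ a ^ (6 * h + 2)) {e : A}
    (ha : e ∣ 1 - (a ^ (3 * h + 2) : Aˣ).val) (he : ∀ k, e ∣ 1 - (x k).val) :
    e ^ 6 ∣ defect a x h := by
  rw [← defect_comp_perm a x h (Equiv.swap j 4)]
  refine pow_six_dvd_defect_of_eq_last (x := x ∘ Equiv.swap j 4) ?_ ?_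
    (fun i hi ↦ hne _ ?_ i hi) ha fun k ↦ he _
  · rw [← hx]
    exact Equiv.prod_comp (Equiv.swap j 4) x
  · rw [Function.comp_apply, Equiv.swap_apply_right, hj]
  · exact fun h3 ↦ absurd ((Equiv.swap_apply_eq_iff).1 h3) (by simp)

end Defect

section Antisymmetry

variable {A : Type*} [CommRing A] {a p : A} {x : Fin 5 → Aˣ} {m : ℕ}

lemma wpDen_eq_mul_wpNum (hx : a ^ 3 * ∏ j, (x j).val = p) {i l : ℕ}
    (ha : a * p ^ (i + l + 1) = 1) :
    wpDen p x i = p ^ (6 * i + 5) * a ^ 3 * wpNum a p x l := by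
  have inv : ∏ j, ((x j)⁻¹ : Aˣ).val = a ^ 3 * (a * p ^ (i + l)) := by
    have cancel : (∏ j, (x j).val) * ∏ j, ((x j)⁻¹ : Aˣ).val = 1 := by
      rw [← prod_mul_distrib]
      exact prod_eq_one fun j _ ↦ (x j).mul_inv
    linear_combination a ^ 4 * p ^ (i + l) * cancel -
      (∏ j, ((x j)⁻¹ : Aˣ).val) * (ha + a * p ^ (i + l) * hx)
  have factor (j : Fin 5) : 1 - ((x j)⁻¹ : Aˣ).val * p ^ (i + 1) =
      -p ^ (i + 1) * ((x j)⁻¹ : Aˣ).val * (1 - x j * a * p ^ l) := by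
    linear_combination -ha - a * p ^ (i + 1 + l) * (x j).inv_mul
  have head : 1 - p ^ (i + 1) = -p ^ (i + 1) * (1 - a * p ^ l) := by linear_combination -ha
  simp only [wpDen, wpNum, head, factor, prod_mul_distrib, inv, prod_const, card_univ,
    Fintype.card_fin]
  linear_combination p ^ (6 * i + 5) * a ^ 3 * (1 - a * p ^ l) *
    (∏ j, (1 - x j * a * p ^ l)) * ha

lemma prod_Ico_wpDen (hx : a ^ 3 * ∏ j, (x j).val = p) {k j : ℕ} (ha : a * p ^ (k + j) = 1) :
    ∏ i ∈ Ico k (k + j), wpDen p x i =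
      p ^ (j * (6 * k + 3 * j + 2)) * a ^ (3 * j) * ∏ i ∈ range j, wpNum a p x i := by
  induction j generalizing k with
  | zero => simp
  | succ j ih =>
    rw [prod_eq_prod_Ico_succ_bot (by omega), wpDen_eq_mul_wpNum hx ha, prod_range_succ,
      show k + (j + 1) = k + 1 + j by ring, ih (by rwa [add_assoc, add_comm 1])]
    ring

lemma wpTerm_eq_antisymm (hx : a ^ 3 * ∏ j, (x j).val = p) {k j : ℕ} (ha : a * p ^ (k + j) = 1) :
    wpTerm a p x (k + j) k = (p ^ j - p ^ k) * p ^ (k + j + 3 * j * k) *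
      (∏ i ∈ range k, wpNum a p x i) * ∏ i ∈ range j, wpNum a p x i := by
  have power : p ^ (j * (6 * k + 3 * j + 2)) * a ^ (3 * j) = p ^ (j * (3 * k + 2)) := by
    calc _ = (a * p ^ (k + j)) ^ (3 * j) * p ^ (j * (3 * k + 2)) := by ring
      _ = _ := by rw [ha, one_pow, one_mul]
  have head : p ^ j * (1 - a * p ^ (2 * k)) = p ^ j - p ^ k := by linear_combination -p ^ k * ha
  rw [wpTerm, prod_Ico_wpDen hx ha, power, ← head]
  ring

theorem wpSum_eq_zero (h2 : IsUnit (2 : A)) (hx : a ^ 3 * ∏ j, (x j).val = p)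
    (ha : a * p ^ m = 1) :
    wpSum a p x m = 0 := by
  have reflect {k j : ℕ} (hkj : k + j = m) : wpTerm a p x m k = -wpTerm a p x m j := by
    subst hkj
    rw [wpTerm_eq_antisymm hx ha, add_comm k, wpTerm_eq_antisymm hx (add_comm k j ▸ ha)]
    ring
  have neg : wpSum a p x m = -wpSum a p x m := by
    rw [wpSum, ← sum_neg_distrib]
    refine (sum_range_reflect _ _).symm.trans <| sum_congr rfl fun k hk ↦ reflect ?_
    have := mem_range.1 hk
    omega
  exact h2.mul_right_eq_zero.1 (by linear_combination neg)

end Antisymmetry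

section Interpolation

open Polynomial LaurentPolynomial
open scoped PowerSeries

lemma pow_card_dvd_eval {R ι : Type*} [CommRing R] [IsDomain R] {e r : R} (he : e ≠ 0) {s : ι → R}
    (S : Finset ι) (hs : (S : Set ι).Pairwise fun i j ↦ Associated e (s i - s j))
    (hr : ∀ i ∈ S, e ∣ r - s i) (F : R[X]) (hF : ∀ i ∈ S, e ^ #S ∣ F.eval (s i)) :
    e ^ #S ∣ F.eval r := by
  classical
  induction S using Finset.induction_on generalizing F with
  | empty => simp
  | insert i S hi ih =>
    rw [card_insert_of_notMem hi] at hF ⊢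
    have hFi := hF i (mem_insert_self i S)
    set G := F /ₘ (X - Polynomial.C (s i))
    have newton (y : R) : F.eval y - F.eval (s i) = (y - s i) * G.eval y := by
      conv_lhs => rw [← modByMonic_add_div F (X - Polynomial.C (s i)), modByMonic_X_sub_C_eq_C_eval]
      simp [G]
    refine (dvd_sub_left hFi).1 ?_
    rw [newton, pow_succ']
    refine mul_dvd_mul (hr i (mem_insert_self i S)) <|
      ih (hs.mono <| by simp) (fun j hj ↦ hr j (mem_insert_of_mem hj)) G fun j hj ↦ ?_
    obtain ⟨u, hu⟩ := hs (by simp [hj]) (by simp) (ne_of_mem_of_not_mem hj hi)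
    have hG := dvd_sub (hF j (mem_insert_of_mem hj)) hFi
    rw [newton, ← hu, pow_succ', mul_assoc, mul_dvd_mul_iff_left he] at hG
    exact u.isUnit.dvd_mul_left.1 hG

/-- The indeterminate of a ring of Laurent polynomials, as a unit. -/
noncomputable def unitT (R : Type*) [CommRing R] : R[T;T⁻¹]ˣ :=
  (isUnit_T 1).unit

lemma map_eval₂_unitT {R S : Type*} [CommRing R] [CommRing S] (f : R →+* S) (u : Sˣ) :
    Units.map (eval₂ f u : R[T;T⁻¹] →* S) (unitT R) = u := by
  ext
  exact (eval₂_T f u 1).trans (by rw [zpow_one])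

lemma X_pow_card_succ_dvd_eval {K ι : Type*} [Field K] {r : K⟦X⟧} {s : ι → K⟦X⟧} (S : Finset ι)
    (hs : (S : Set ι).Pairwise fun i j ↦ Associated PowerSeries.X (s i - s j))
    (hr : ∀ i ∈ S, PowerSeries.X ∣ r - s i) (F : K⟦X⟧[X])
    (hF : ∀ i ∈ S, PowerSeries.X ^ (#S + 1) ∣ F.eval (s i))
    (hF0 : F.map PowerSeries.constantCoeff = 0) :
    PowerSeries.X ^ (#S + 1) ∣ F.eval r := by
  have hX : (PowerSeries.X : K⟦X⟧) ≠ 0 := PowerSeries.X_ne_zero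
  obtain ⟨G, rfl⟩ : Polynomial.C PowerSeries.X ∣ F := (C_dvd_iff_dvd_coeff _ _).2 fun i ↦
    PowerSeries.X_dvd_iff.2 <| by rw [← coeff_map, hF0, coeff_zero]
  simp only [eval_mul, Polynomial.eval_C, pow_succ', mul_dvd_mul_iff_left hX] at hF ⊢
  exact pow_card_dvd_eval hX S hs hr G hF

theorem X_pow_card_succ_dvd_eval₂ {K ι : Type*} [Field K] {r : K⟦X⟧ˣ} {s : ι → K⟦X⟧ˣ}
    (S : Finset ι)
    (hs : (S : Set ι).Pairwise fun i j ↦ Associated PowerSeries.X ((s i).val - (s j).val))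
    (hr : ∀ i ∈ S, PowerSeries.X ∣ r.val - (s i).val) (F : K⟦X⟧[T;T⁻¹])
    (hF : ∀ i ∈ S, PowerSeries.X ^ (#S + 1) ∣ eval₂ (RingHom.id _) (s i) F)
    (hF0 : eval₂ (LaurentPolynomial.C.comp PowerSeries.constantCoeff) (unitT K) F = 0) :
    PowerSeries.X ^ (#S + 1) ∣ eval₂ (RingHom.id _) r F := by
  obtain ⟨n, P, hP⟩ := exists_T_pow F
  have dvd_iff (u : K⟦X⟧ˣ) (k : ℕ) :
      PowerSeries.X ^ k ∣ eval₂ (RingHom.id _) u F ↔ PowerSeries.X ^ k ∣ P.eval u.val := by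
    rw [← (u ^ (n : ℤ)).isUnit.dvd_mul_right, ← eval₂_T (RingHom.id _), ← map_mul, ← hP,
      eval₂_toLaurent, Polynomial.eval₂_id]
  have reduction : toLaurent (P.map PowerSeries.constantCoeff) =
      eval₂ (LaurentPolynomial.C.comp PowerSeries.constantCoeff) (unitT K) (toLaurent P) := by
    rw [← eval₂_C_X (p := P.map _), hom_eval₂, Polynomial.eval₂_map, eval₂_toLaurent, toLaurent_X]
    congr 1
    ext1 c
    exact toLaurent_C _
  rw [hP, map_mul, hF0, zero_mul, toLaurent_eq_zero] at reduction
  simp only [dvd_iff] at hF ⊢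
  exact X_pow_card_succ_dvd_eval S hs hr P hF reduction

end Interpolation

section TruncatedDefect

variable {A B : Type*} [CommRing A] [CommRing B]

/-- The difference of the two sides of the supercongruence for `n = 3 * h + 2` and the truncation
index `M`, with `a` in place of `q` and multiplied by `(1 - a) * (a ^ 3; a ^ 3)_M ^ 6`. -/
def truncDefect (a : A) (h M : ℕ) : A :=
  wpSum a (a ^ 3) 1 M - 5 * (1 - a ^ (6 * h + 4)) *
    shiftedFact (a ^ 2) (a ^ 3) (2 * h + 1) ^ 3 * shiftedFact (a ^ 3) (a ^ 3) (2 * h + 1) ^ 3 *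
    ∏ i ∈ Ico (2 * h + 1) M, wpDen (a ^ 3) 1 i

lemma map_truncDefect (f : A →+* B) (a : A) (h M : ℕ) :
    f (truncDefect a h M) = truncDefect (f a) h M := by
  simp only [truncDefect, wpDen_one, map_sub, map_mul, map_pow, map_prod, map_shiftedFact,
    map_wpSum, map_ofNat, map_one]
  congr 2
  ext
  simp

variable {a : Aˣ} {h : ℕ}

lemma sq_mul_jacksonWeight_one :
    (a ^ (3 * h + 2) : Aˣ).val ^ 2 * jacksonWeight a 1 h =
      (1 - (a ^ (3 * h + 2) : Aˣ).val) ^ 3 *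
        (5 + (a⁻¹ ^ (3 * h + 2) : Aˣ).val * (1 - (a ^ (3 * h + 2) : Aˣ).val) ^ 2) := by
  have inv : (a ^ (3 * h + 2) : Aˣ).val * (a⁻¹ ^ (3 * h + 2) : Aˣ).val = 1 := by
    rw [inv_pow, Units.mul_inv]
  simp only [jacksonWeight, Pi.one_apply, inv_one, Units.val_one, sum_const, card_univ,
    Fintype.card_fin]
  generalize (a ^ (3 * h + 2) : Aˣ).val = Q, (a⁻¹ ^ (3 * h + 2) : Aˣ).val = W at inv ⊢
  linear_combination (Q ^ 4 - 5 * Q ^ 3 + 10 * Q ^ 2 - 15 * Q + 5 + W + Q * W ^ 2) * inv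

lemma shiftedFact_sq_eq_symProd :
    shiftedFact (a.val ^ 2) (a.val ^ 3) (2 * h + 1) =
      (1 - (a ^ (3 * h + 2) : Aˣ).val) * symProd (a ^ 3) (a ^ (3 * h + 2) : Aˣ).val h := by
  have base : a ^ 2 = a ^ (3 * h + 2) * (a ^ 3)⁻¹ ^ h := by group
  rw [← shiftedFact_eq_symProd]
  exact congrArg₂ (shiftedFact · · _) (mod_cast congrArg Units.val base) (by simp)

lemma pow_six_dvd_jacksonConst_mul_jacksonWeight_one_sub {e : A}
    (he : e ∣ 1 - (a ^ (3 * h + 2) : Aˣ).val) :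
    e ^ 6 ∣ jacksonConst a h * jacksonWeight a 1 h - 5 * (1 - a.val ^ (6 * h + 4)) *
      shiftedFact (a.val ^ 2) (a.val ^ 3) (2 * h + 1) ^ 3 *
      shiftedFact (a.val ^ 3) (a.val ^ 3) (2 * h + 1) ^ 3 := by
  have power : a.val ^ (6 * h + 4) = (a ^ (3 * h + 2) : Aˣ).val ^ 2 := by
    rw [Units.val_pow_eq_pow_val, ← pow_mul]
    ring_nf
  have weight := sq_mul_jacksonWeight_one (a := a) (h := h)
  have symm := sq_dvd_symProd_sub (p := a ^ 3) he h
  rw [shiftedFact_sq_eq_symProd, power, jacksonConst, Units.val_pow_eq_pow_val a 3]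
  generalize (a ^ (3 * h + 2) : Aˣ).val = Q, (a⁻¹ ^ (3 * h + 2) : Aˣ).val = W at *
  generalize shiftedFact (a.val ^ 3) (a.val ^ 3) (2 * h + 1) = F, symProd (a ^ 3) Q h = P,
    symProd (a ^ 3) 1 h = S at *
  have four := (mul_dvd_mul (pow_dvd_pow_of_dvd he 4) symm).mul_right
    (-5 * (P ^ 2 + P * (Q ^ h * S) + (Q ^ h * S) ^ 2))
  have six := (pow_dvd_pow_of_dvd he 6).mul_right (W * (Q ^ h * S) ^ 3)
  rw [← pow_add] at four
  convert (dvd_add four six).mul_left (F ^ 3 * (1 + Q)) using 1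
  linear_combination F ^ 3 * (1 - Q ^ 2) * (Q ^ h * S) ^ 3 * weight

lemma pow_six_dvd_truncDefect {e : A} (hdefect : e ^ 6 ∣ defect a 1 h)
    (he : e ∣ 1 - (a ^ (3 * h + 2) : Aˣ).val) {M : ℕ} (hM : 2 * h + 1 ≤ M) :
    e ^ 6 ∣ truncDefect a.val h M := by
  have tail : e ^ 6 ∣ wpNum a.val (a.val ^ 3) 1 (2 * h + 1) := by
    rw [wpNum_one]
    refine pow_dvd_pow_of_dvd (he.trans ⟨1 + (a ^ (3 * h + 2) : Aˣ).val, ?_⟩) 6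
    rw [Units.val_pow_eq_pow_val]
    ring
  have base := dvd_add hdefect (pow_six_dvd_jacksonConst_mul_jacksonWeight_one_sub he)
  rw [defect, Units.val_pow_eq_pow_val] at base
  convert dvd_add (dvd_wpSum_sub_wpSum_mul _ _ _ hM tail)
    (base.mul_right (∏ i ∈ Ico (2 * h + 1) M, wpDen (a.val ^ 3) 1 i)) using 1
  rw [truncDefect]
  ring

end TruncatedDefect

section LocalExpansion

open scoped PowerSeries

variable {K : Type*} [Field K]

lemma isUnit_one_add_X : IsUnit (1 + PowerSeries.X : K⟦X⟧) := by
  simp [PowerSeries.isUnit_iff_constantCoeff]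

/-- The power series `1 + X` as a unit. -/
noncomputable def oneAddX (K : Type*) [Field K] : K⟦X⟧ˣ :=
  (isUnit_one_add_X (K := K)).unit

lemma constantCoeff_oneAddX_zpow (k : ℤ) :
    PowerSeries.constantCoeff (oneAddX K ^ k).val = 1 := by
  have one : Units.map (PowerSeries.constantCoeff (R := K) : K⟦X⟧ →* K) (oneAddX K) = 1 := by
    ext
    simp [oneAddX]
  exact congrArg Units.val ((map_zpow _ _ k).trans (by rw [one, one_zpow]))

lemma associated_X_oneAddX_pow_sub_one [CharZero K] {j : ℕ} (hj : j ≠ 0) :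
    Associated PowerSeries.X ((oneAddX K ^ j).val - 1) := by
  have unit : IsUnit (∑ i ∈ range j, (1 + PowerSeries.X : K⟦X⟧) ^ i) := by
    simpa [PowerSeries.isUnit_iff_constantCoeff] using hj
  rw [Units.val_pow_eq_pow_val, oneAddX, IsUnit.unit_spec, ← mul_geom_sum, add_sub_cancel_left]
  exact associated_mul_unit_right _ _ unit

lemma associated_X_oneAddX_zpow_sub [CharZero K] {k l : ℤ} (hkl : k ≠ l) :
    Associated PowerSeries.X ((oneAddX K ^ k).val - (oneAddX K ^ l).val) := by
  wlog hlt : l < k generalizing k l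
  · rw [← neg_sub]
    exact (this hkl.symm (by omega)).neg_right
  obtain ⟨j, rfl⟩ := Int.le.dest hlt.le
  have hj : j ≠ 0 := by omega
  rw [zpow_add, zpow_natCast, Units.val_mul, ← mul_sub_one]
  exact (associated_X_oneAddX_pow_sub_one hj).trans (associated_unit_mul_right _ _ (Units.isUnit _))

lemma oneAddX_zpow_injective [CharZero K] : Function.Injective (oneAddX K ^ · : ℤ → K⟦X⟧ˣ) := by
  refine fun k l heq ↦ not_not.1 fun hkl ↦ PowerSeries.X_ne_zero (R := K) ?_
  exact (associated_X_oneAddX_zpow_sub hkl).eq_zero_iff.2 (sub_eq_zero.2 (congrArg Units.val heq))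

variable {z : Kˣ}

/-- The expansion point `z * (1 + X) ^ 30`. The exponent is divisible enough for the parameter
values in `X_pow_six_dvd_defect_one` to be powers of `1 + X`. -/
noncomputable def expansionPoint (z : Kˣ) : K⟦X⟧ˣ :=
  Units.map (PowerSeries.C (R := K) : K →* K⟦X⟧) z * oneAddX K ^ 30

lemma constantCoeff_expansionPoint :
    PowerSeries.constantCoeff (expansionPoint z).val = z := by
  rw [expansionPoint, Units.val_mul, map_mul, ← zpow_natCast, constantCoeff_oneAddX_zpow, mul_one,
    Units.coe_map, MonoidHom.coe_coe, PowerSeries.constantCoeff_C]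

lemma expansionPoint_pow {k : ℕ} (hz : z ^ k = 1) :
    expansionPoint z ^ k = oneAddX K ^ (30 * k) := by
  rw [expansionPoint, mul_pow, ← map_pow, hz, map_one, one_mul, pow_mul]

lemma associated_X_one_sub_expansionPoint_pow [CharZero K] {k : ℕ} (hk : k ≠ 0) (hz : z ^ k = 1) :
    Associated PowerSeries.X (1 - (expansionPoint z).val ^ k) := by
  rw [← Units.val_pow_eq_pow_val, expansionPoint_pow hz, ← neg_sub]
  exact (associated_X_oneAddX_pow_sub_one (by omega)).neg_right

lemma isUnit_one_sub_expansionPoint_pow {k : ℕ} (hz : z ^ k ≠ 1) :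
    IsUnit (1 - (expansionPoint z).val ^ k) := by
  rw [PowerSeries.isUnit_iff_constantCoeff, map_sub, map_pow, constantCoeff_expansionPoint, map_one,
    isUnit_iff_ne_zero, sub_ne_zero]
  exact fun h ↦ hz (Units.ext (by simpa using h.symm))

lemma eq_of_expansionPoint_pow_eq {h i : ℕ} {k : ℤ} (hz : IsPrimitiveRoot z (3 * h + 2))
    (hi : i < 2 * h + 1)
    (heq : oneAddX K ^ k * expansionPoint z ^ (3 * i) = expansionPoint z ^ (6 * h + 2)) :
    i = h := by
  have eval := congrArg (fun u : K⟦X⟧ˣ ↦ PowerSeries.constantCoeff u.val) heq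
  simp only [Units.val_mul, Units.val_pow_eq_pow_val, map_mul, map_pow, constantCoeff_oneAddX_zpow,
    constantCoeff_expansionPoint, one_mul] at eval
  have hmod : 3 * i ≡ 6 * h + 2 [MOD 3 * h + 2] := by
    rw [hz.eq_orderOf, ← pow_eq_pow_iff_modEq]
    exact Units.ext (mod_cast eval)
  obtain ⟨c, hc⟩ := (Nat.modEq_iff_dvd' (by omega)).1 hmod
  obtain rfl | rfl | hc2 : c = 0 ∨ c = 1 ∨ 2 ≤ c := by omega
  · omega
  · omega
  · have := Nat.mul_le_mul_left (3 * h + 2) hc2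
    omega

end LocalExpansion

section Curve

open LaurentPolynomial
open scoped PowerSeries

variable {A B : Type*} [CommRing A] [CommRing B]

/-- The exponents of the curve of parameters along which the defect is interpolated. Their sum is
zero, as the antisymmetry of the very-well-poised terms requires `∏ j, x j = 1`. -/
def curveExponent : Fin 5 → ℤ :=
  ![1, 2, 3, 4, -10]

/-- The curve `u ↦ (u, u ^ 2, u ^ 3, u ^ 4, u ^ (-10))` of parameters along which the defect is
interpolated. -/
def curve (u : Aˣ) : Fin 5 → Aˣ :=
  fun j ↦ u ^ curveExponent j

lemma prod_curve (u : Aˣ) : ∏ j, curve u j = 1 := by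
  simp only [curve, Fin.prod_univ_five, ← zpow_add]
  exact zpow_zero u

lemma curve_one : curve (1 : Aˣ) = 1 :=
  funext fun _ ↦ one_zpow _

lemma eval₂_defect_curve (f : A →+* B) (u : Bˣ) (a : Aˣ) (h : ℕ) :
    eval₂ f u (defect (Units.map (C (R := A) : A →* A[T;T⁻¹]) a) (curve (unitT A)) h) =
      defect (Units.map (f : A →* B) a) (curve u) h := by
  have hC : Units.map (eval₂ f u : A[T;T⁻¹] →* B) (Units.map (C (R := A) : A →* A[T;T⁻¹]) a) =
      Units.map (f : A →* B) a := by
    ext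
    exact eval₂_C f u _
  simp only [map_defect, hC, curve, map_zpow, map_eval₂_unitT]
  rfl

lemma defect_eq_zero {a : Aˣ} {h : ℕ} (h2 : IsUnit (2 : A)) (ha : a ^ (3 * h + 2) = 1)
    {x : Fin 5 → Aˣ} (hx : ∏ j, x j = 1) : defect a x h = 0 := by
  have balanced : a.val ^ 3 * ∏ j, (x j).val = (a ^ 3 : Aˣ).val := by
    rw [← Units.coe_prod, hx, Units.val_one, mul_one, Units.val_pow_eq_pow_val]
  have terminating : a * (a ^ 3) ^ (2 * h + 1) = 1 := by
    calc _ = (a ^ (3 * h + 2)) ^ 2 := by group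
      _ = 1 := by rw [ha, one_pow]
  have hsum := wpSum_eq_zero h2 balanced (mod_cast Units.val_eq_one.2 terminating)
  rw [defect, hsum, jacksonConst, ha, Units.val_one]
  ring

variable {K : Type*} [Field K] [CharZero K] {z : Kˣ} {h : ℕ}

/-- The exponents of `1 + X`, in units of `3 * h + 2`, of the five interpolation points. The `j`-th
is `-60 / curveExponent j`, so that there the `j`-th parameter equals `q ^ (-2 * (3 * h + 2))` for
`q = z * (1 + X) ^ 30`. -/
def nodeExponent : Fin 5 → ℤ :=
  ![-60, -30, -20, -15, 6]

lemma X_pow_six_dvd_defect_node (hz : IsPrimitiveRoot z (3 * h + 2)) (j : Fin 5) :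
    PowerSeries.X ^ 6 ∣ defect (expansionPoint z)
      (curve (oneAddX K ^ (nodeExponent j * (3 * h + 2)))) h := by
  set w := oneAddX K
  set n : ℤ := 3 * h + 2
  have hpow : expansionPoint z ^ (3 * h + 2) = w ^ (30 * n) := by
    rw [expansionPoint_pow hz.pow_eq_one, ← zpow_natCast]
    push_cast
    rfl
  have hcurve (k : Fin 5) :
      curve (w ^ (nodeExponent j * n)) k = w ^ (nodeExponent j * curveExponent k * n) := by
    rw [curve, ← zpow_mul, mul_right_comm]
  have diagonal : nodeExponent j * curveExponent j = -60 := by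
    fin_cases j <;> rfl
  have generic (k : Fin 5) : nodeExponent j * curveExponent k ≠ 30 := by
    fin_cases j <;> fin_cases k <;> decide
  refine pow_six_dvd_defect (prod_curve _) (j := j) ?_ (fun k _ i hi heq ↦ ?_) ?_ fun k ↦ ?_
  · rw [hcurve, diagonal, inv_pow, hpow, ← zpow_neg, ← zpow_natCast, ← zpow_mul]
    ring_nf
  · obtain rfl := eq_of_expansionPoint_pow_eq hz hi (hcurve k ▸ heq)
    rw [show 6 * i + 2 = 3 * i + 2 + 3 * i by ring, pow_add, mul_left_inj, hcurve, hpow] at heq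
    exact generic k (mul_right_cancel₀ (by omega) (oneAddX_zpow_injective heq))
  · rw [Units.val_pow_eq_pow_val]
    exact (associated_X_one_sub_expansionPoint_pow (by omega) hz.pow_eq_one).dvd
  · rw [hcurve, PowerSeries.X_dvd_iff, map_sub, constantCoeff_oneAddX_zpow, map_one, sub_self]

lemma X_pow_six_dvd_defect_one (hz : IsPrimitiveRoot z (3 * h + 2)) :
    PowerSeries.X ^ 6 ∣ defect (expansionPoint z) 1 h := by
  set F := defect (Units.map (C (R := K⟦X⟧) : K⟦X⟧ →* K⟦X⟧[T;T⁻¹]) (expansionPoint z))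
    (curve (unitT _)) h
  have eval_F (u : K⟦X⟧ˣ) :
      eval₂ (RingHom.id _) u F = defect (expansionPoint z) (curve u) h :=
    eval₂_defect_curve (RingHom.id _) u _ h
  rw [← curve_one, ← eval_F]
  refine X_pow_card_succ_dvd_eval₂ univ
    (s := fun j ↦ oneAddX K ^ (nodeExponent j * (3 * h + 2))) ?_ ?_ F ?_ ?_
  · refine fun i _ j _ hij ↦ associated_X_oneAddX_zpow_sub fun heq ↦ hij ?_
    have injective : Function.Injective nodeExponent := by decide
    exact injective (mul_right_cancel₀ (by omega) heq)
  · intro j _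
    rw [PowerSeries.X_dvd_iff, map_sub, constantCoeff_oneAddX_zpow, Units.val_one, map_one,
      sub_self]
  · exact fun j _ ↦ eval_F _ ▸ X_pow_six_dvd_defect_node hz j
  · rw [eval₂_defect_curve]
    refine defect_eq_zero ?_ ?_ (prod_curve _)
    · rw [← map_ofNat (C (R := K)) 2]
      exact (isUnit_iff_ne_zero.2 two_ne_zero).map C
    · rw [← map_pow, expansionPoint_pow hz.pow_eq_one, ← zpow_natCast]
      ext : 1
      rw [Units.coe_map, MonoidHom.coe_coe, RingHom.comp_apply, constantCoeff_oneAddX_zpow, map_one,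
        Units.val_one]

lemma X_pow_six_dvd_truncDefect (hz : IsPrimitiveRoot z (3 * h + 2)) {M : ℕ}
    (hM : 2 * h + 1 ≤ M) :
    PowerSeries.X ^ 6 ∣ truncDefect (expansionPoint z).val h M :=
  pow_six_dvd_truncDefect (X_pow_six_dvd_defect_one hz) (by
    rw [Units.val_pow_eq_pow_val]
    exact (associated_X_one_sub_expansionPoint_pow (by omega) hz.pow_eq_one).dvd) hM

end Curve

section BlockSums

variable {A : Type*} [CommRing A]

lemma shiftedFact_self_pow_mul_prod_Ico (p : A) {k m : ℕ} (hkm : k ≤ m) :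
    shiftedFact p p k ^ 6 * ∏ i ∈ Ico k m, wpDen p 1 i = shiftedFact p p m ^ 6 := by
  simp only [shiftedFact, wpDen_one, prod_pow, ← mul_pow, ← pow_succ',
    prod_range_mul_prod_Ico _ hkm]

lemma pow_mul_wpSum_one {a p c : A} {ρ : ℕ → A} {m : ℕ}
    (hρ : ∀ k ≤ m, c * shiftedFact a p k = shiftedFact p p k * ρ k) :
    c ^ 6 * wpSum a p 1 m =
      shiftedFact p p m ^ 6 * ∑ k ∈ range (m + 1), (1 - a * p ^ (2 * k)) * p ^ k * ρ k ^ 6 := by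
  rw [wpSum, mul_sum, mul_sum]
  refine sum_congr rfl fun k hk ↦ ?_
  have hk := mem_range_succ_iff.1 hk
  have num : ∏ i ∈ range k, wpNum a p 1 i = shiftedFact a p k ^ 6 := by
    simp only [shiftedFact, wpNum_one, prod_pow]
  have ratio : (c * shiftedFact a p k) ^ 6 = (shiftedFact p p k * ρ k) ^ 6 := by rw [hρ k hk]
  rw [wpTerm, num, ← shiftedFact_self_pow_mul_prod_Ico p hk]
  linear_combination (1 - a * p ^ (2 * k)) * p ^ k * (∏ i ∈ Ico k m, wpDen p 1 i) * ratio

variable {K : Type*} [Field K] {a p : K} {t : ℕ → K} {d m : ℕ}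

lemma mul_shiftedFact_of_recurrence (hp : p ^ d = 1)
    (ht : ∀ k, t (k + 1) * (1 - p ^ (k + 1)) = t k * (1 - a * p ^ k)) (j i : ℕ) :
    t (d * j) * shiftedFact a p i = shiftedFact p p i * t (d * j + i) := by
  induction i with
  | zero => simp [shiftedFact]
  | succ i ih =>
    have step := ht (d * j + i)
    rw [add_assoc, pow_add, pow_add _ (d * j), pow_mul, hp, one_pow, one_mul, one_mul] at step
    rw [shiftedFact_succ, shiftedFact_succ, ← pow_succ']
    linear_combination (1 - a * p ^ i) * ih - shiftedFact p p i * step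

lemma wpSum_one_eq_zero (h2 : (2 : K) ≠ 0) (hap : a ^ 3 = p) (ha : a * p ^ m = 1) {M : ℕ}
    (hmM : m ≤ M) : wpSum a p 1 M = 0 := by
  have num : wpNum a p 1 m = 0 := by rw [wpNum_one, ha, sub_self, zero_pow (by omega)]
  have tail := dvd_wpSum_sub_wpSum_mul a p 1 hmM num.symm.dvd
  rwa [wpSum_eq_zero h2.isUnit (by simpa using hap) ha, zero_mul, sub_zero, zero_dvd_iff] at tail

lemma sum_eq_zero_of_recurrence (h2 : (2 : K) ≠ 0) (hp : IsPrimitiveRoot p d) (hd : 0 < d)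
    (hap : a ^ 3 = p) (ha : a * p ^ m = 1)
    (ht : ∀ k, t (k + 1) * (1 - p ^ (k + 1)) = t k * (1 - a * p ^ k)) {M : ℕ}
    (hmM : m % d ≤ M % d) :
    ∑ k ∈ range (M + 1), (1 - a * p ^ (2 * k)) * p ^ k * t k ^ 6 = 0 := by
  set f := fun k ↦ (1 - a * p ^ (2 * k)) * p ^ k * t k ^ 6
  have block (j : ℕ) {l : ℕ} (hml : m % d ≤ l) (hld : l < d) :
      ∑ i ∈ range (l + 1), f (d * j + i) = 0 := by
    have fact_ne : shiftedFact p p l ≠ 0 := by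
      refine prod_ne_zero_iff.2 fun i hi ↦ sub_ne_zero.2 ?_
      have := mem_range.1 hi
      rw [← pow_succ']
      exact (hp.pow_ne_one_of_pos_of_lt (by omega) (by omega)).symm
    have ha' : a * p ^ (m % d) = 1 := by rwa [← pow_mod_orderOf, ← hp.eq_orderOf] at ha
    have sum := pow_mul_wpSum_one (m := l) fun i _ ↦
      mul_shiftedFact_of_recurrence hp.pow_eq_one ht j i
    rw [wpSum_one_eq_zero h2 hap ha' hml, mul_zero] at sum
    convert (mul_eq_zero.1 sum.symm).resolve_left (pow_ne_zero 6 fact_ne) using 2 with i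
    simp only [f, pow_add, pow_mul, pow_right_comm p 2, hp.pow_eq_one, one_pow, one_mul]
  have full (j : ℕ) : ∑ k ∈ range (d * j), f k = 0 := by
    induction j with
    | zero => simp
    | succ j ih =>
      have last := block j (l := d - 1) (Nat.le_sub_one_of_lt (m.mod_lt hd)) (by omega)
      rw [Nat.sub_add_cancel hd] at last
      rw [mul_add_one, sum_range_add, ih, last, add_zero]
  rw [← Nat.div_add_mod M d, add_assoc, sum_range_add, full, zero_add]
  exact block _ hmM (M.mod_lt hd)

end BlockSums

section ProperDivisors

open scoped PowerSeries

lemma count_dvd_mul_three_add_three {d : ℕ} (hd : d.Coprime 3) (k : ℕ) :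
    k.count (d ∣ 3 * · + 3) = k / d := by
  rw [Nat.count_eq_card_filter_range, ← Nat.card_multiples]
  congr! 2 with i
  rw [← mul_add_one, hd.dvd_mul_left]

lemma count_dvd_le_count_dvd {d c v : ℕ} (hd : d.Coprime 3) (hpos : 0 < d) (hv : d ∣ 3 * v + c)
    (k : ℕ) : k.count (d ∣ 3 * · + 3) ≤ k.count (d ∣ 3 * · + c) := by
  have modEq : k.count (d ∣ 3 * · + c) = k.count (· ≡ v [MOD d]) := by
    congr! 2 with i
    rw [← Nat.modEq_zero_iff_dvd] at hv ⊢
    refine ⟨fun hi ↦ ?_, fun hi ↦ ((hi.mul_left 3).add_right c).trans hv⟩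
    exact ((hi.trans hv.symm).add_right_cancel' c).cancel_left_of_coprime hd
  rw [count_dvd_mul_three_add_three hd, modEq, Nat.count_modEq_card _ hpos]
  exact Nat.le_add_right _ _

variable {K : Type*} [Field K] [CharZero K] {z : Kˣ} {d h : ℕ}

lemma associated_X_pow_count_shiftedFact (hz : IsPrimitiveRoot z d) {c : ℕ} (hc : 0 < c) (k : ℕ) :
    Associated (PowerSeries.X ^ k.count (d ∣ 3 * · + c))
      (shiftedFact ((expansionPoint z).val ^ c) ((expansionPoint z).val ^ 3) k) := by
  induction k with
  | zero => simp [shiftedFact]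
  | succ k ih =>
    rw [shiftedFact_succ, Nat.count_succ, pow_add, ← pow_mul, ← pow_add _ c, add_comm c]
    refine ih.mul_mul ?_
    split_ifs with hdvd
    · rw [pow_one]
      exact associated_X_one_sub_expansionPoint_pow (by omega) ((hz.pow_eq_one_iff_dvd _).2 hdvd)
    · refine (associated_one_iff_isUnit.2 ?_).symm
      exact isUnit_one_sub_expansionPoint_pow (mt (hz.pow_eq_one_iff_dvd _).1 hdvd)

lemma shiftedFact_expansionPoint_dvd (hz : IsPrimitiveRoot z d) (hd : d ∣ 3 * h + 2) {c v : ℕ}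
    (hc : 0 < c) (hv : 3 * h + 2 ∣ 3 * v + c) (k : ℕ) :
    shiftedFact ((expansionPoint z).val ^ 3) ((expansionPoint z).val ^ 3) k ∣
      shiftedFact ((expansionPoint z).val ^ c) ((expansionPoint z).val ^ 3) k := by
  have coprime : d.Coprime 3 := Nat.Coprime.coprime_dvd_left hd (by norm_num)
  have hpos : 0 < d := Nat.pos_of_dvd_of_pos hd (by omega)
  refine (associated_X_pow_count_shiftedFact hz (by omega) k).dvd_iff_dvd_left.1 ?_
  refine (associated_X_pow_count_shiftedFact hz hc k).dvd_iff_dvd_right.1 ?_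
  exact pow_dvd_pow _ (count_dvd_le_count_dvd coprime hpos (hd.trans hv) k)

lemma shiftedFact_expansionPoint_ne_zero (hz : IsPrimitiveRoot z d) {c : ℕ} (hc : 0 < c) (k : ℕ) :
    shiftedFact ((expansionPoint z).val ^ c) ((expansionPoint z).val ^ 3) k ≠ 0 :=
  (associated_X_pow_count_shiftedFact hz hc k).ne_zero_iff.1 (pow_ne_zero _ PowerSeries.X_ne_zero)

lemma X_mul_shiftedFact_dvd_wpSum (hz : IsPrimitiveRoot z d) (hd : d ∣ 3 * h + 2) {M : ℕ}
    (hM : (2 * h + 1) % d ≤ M % d) :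
    PowerSeries.X * shiftedFact ((expansionPoint z).val ^ 3) ((expansionPoint z).val ^ 3) M ^ 6 ∣
      wpSum (expansionPoint z).val ((expansionPoint z).val ^ 3) 1 M := by
  set a := (expansionPoint z).val
  choose ρ hρ using shiftedFact_expansionPoint_dvd (c := 1) (v := 2 * h + 1) hz hd
    one_pos (Dvd.intro_left 2 (by ring))
  rw [pow_one] at hρ
  have sum := pow_mul_wpSum_one (m := M) fun k _ ↦ (one_mul _).trans (hρ k)
  rw [one_pow, one_mul] at sum
  rw [sum, mul_comm]
  refine mul_dvd_mul_left _ (PowerSeries.X_dvd_iff.2 ?_)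
  have recurrence (k : ℕ) : ρ (k + 1) * (1 - (a ^ 3) ^ (k + 1)) = ρ k * (1 - a * (a ^ 3) ^ k) := by
    refine mul_left_cancel₀ (shiftedFact_expansionPoint_ne_zero hz three_pos k) ?_
    have succ := hρ (k + 1)
    rw [shiftedFact_succ, shiftedFact_succ, ← pow_succ'] at succ
    linear_combination (1 - a * (a ^ 3) ^ k) * hρ k - succ
  have coeff (k : ℕ) := congrArg (PowerSeries.constantCoeff (R := K)) (recurrence k)
  simp only [map_sum, map_mul, map_sub, map_one, map_pow, a, constantCoeff_expansionPoint]
    at coeff ⊢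
  have hz' := IsPrimitiveRoot.coe_units_iff.2 hz
  have coprime : d.Coprime 3 := Nat.Coprime.coprime_dvd_left hd (by norm_num)
  refine sum_eq_zero_of_recurrence two_ne_zero (hz'.pow_of_coprime 3 coprime.symm)
    (Nat.pos_of_dvd_of_pos hd (by omega)) rfl ?_ coeff hM
  rw [← pow_mul, ← pow_succ']
  exact (hz'.pow_eq_one_iff_dvd _).2 (hd.trans (Dvd.intro_left 2 (by ring)))

lemma X_mul_shiftedFact_dvd_truncDefect (hz : IsPrimitiveRoot z d) (hd : d ∣ 3 * h + 2) {M : ℕ}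
    (hmM : 2 * h + 1 ≤ M) (hM : (2 * h + 1) % d ≤ M % d) :
    PowerSeries.X * shiftedFact ((expansionPoint z).val ^ 3) ((expansionPoint z).val ^ 3) M ^ 6 ∣
      truncDefect (expansionPoint z).val h M := by
  have root : z ^ (6 * h + 4) = 1 :=
    (hz.pow_eq_one_iff_dvd _).2 (hd.trans (Dvd.intro_left 2 (by ring)))
  refine dvd_sub (X_mul_shiftedFact_dvd_wpSum hz hd hM) ?_
  have X_dvd := (associated_X_one_sub_expansionPoint_pow (by omega) root).dvd
  have fact_dvd := shiftedFact_expansionPoint_dvd (c := 2) (v := h) hz hd two_pos dvd_rfl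
    (2 * h + 1)
  rw [← shiftedFact_self_pow_mul_prod_Ico _ hmM]
  convert mul_dvd_mul_right ((mul_dvd_mul X_dvd (pow_dvd_pow_of_dvd fact_dvd 3)).mul_left 5)
    (shiftedFact ((expansionPoint z).val ^ 3) ((expansionPoint z).val ^ 3) (2 * h + 1) ^ 3 *
      ∏ i ∈ Ico (2 * h + 1) M, wpDen ((expansionPoint z).val ^ 3) 1 i) using 1 <;> ring

lemma X_pow_six_mul_shiftedFact_dvd_truncDefect (hz : IsPrimitiveRoot z (3 * h + 2)) {M : ℕ}
    (hmM : 2 * h + 1 ≤ M) (hM : M < 3 * h + 2) :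
    PowerSeries.X ^ 6 *
        shiftedFact ((expansionPoint z).val ^ 3) ((expansionPoint z).val ^ 3) M ^ 6 ∣
      truncDefect (expansionPoint z).val h M := by
  have fact_unit := associated_X_pow_count_shiftedFact hz three_pos M
  rw [count_dvd_mul_three_add_three (by norm_num), Nat.div_eq_of_lt hM, pow_zero] at fact_unit
  rw [((associated_one_iff_isUnit.1 fact_unit.symm).pow 6).mul_right_dvd]
  exact X_pow_six_dvd_truncDefect hz hmM

end ProperDivisors

section Globalization

open Polynomial
open scoped PowerSeries

lemma qcong_of_dvd_num {f g : RatFunc ℚ} {P : ℚ[X]} (h : P ∣ (f - g).num) : qcong f g P := by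
  obtain ⟨r, hr⟩ := h
  refine ⟨r, (f - g).denom, ?_, ?_⟩
  · exact ((f - g).isCoprime_num_denom.of_isCoprime_of_dvd_left (hr ▸ dvd_mul_right P r)).symm
  · rw [← mul_div_assoc, ← map_mul, ← hr, RatFunc.num_div_denom]

variable {K : Type*} [Field K] [CharZero K] {z : Kˣ} {d e : ℕ}

lemma constantCoeff_aeval_expansionPoint (f : ℚ[X]) :
    PowerSeries.constantCoeff (aeval (expansionPoint z).val f) = aeval (z : K) f := by
  rw [aeval_def, aeval_def, hom_eval₂, constantCoeff_expansionPoint]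
  congr 1

lemma X_dvd_aeval_expansionPoint_iff (hz : IsPrimitiveRoot z d) (hd : 0 < d) {f : ℚ[X]} :
    PowerSeries.X ∣ aeval (expansionPoint z).val f ↔ cyclotomic d ℚ ∣ f := by
  rw [PowerSeries.X_dvd_iff, constantCoeff_aeval_expansionPoint,
    cyclotomic_eq_minpoly_rat (IsPrimitiveRoot.coe_units_iff.2 hz) hd, minpoly.dvd_iff]

lemma associated_X_aeval_expansionPoint_cyclotomic (hz : IsPrimitiveRoot z d) (hd : 0 < d) :
    Associated PowerSeries.X (aeval (expansionPoint z).val (cyclotomic d ℚ)) := by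
  refine associated_of_dvd_dvd ((X_dvd_aeval_expansionPoint_iff hz hd).2 dvd_rfl) ?_
  rw [(associated_X_one_sub_expansionPoint_pow hd.ne' hz.pow_eq_one).dvd_iff_dvd_right,
    dvd_sub_comm]
  simpa using map_dvd (aeval (expansionPoint z).val) (cyclotomic.dvd_X_pow_sub_one d ℚ)

lemma cyclotomic_pow_dvd_of_X_pow_dvd (hz : IsPrimitiveRoot z d) (hd : 0 < d) {f : ℚ[X]}
    (h : PowerSeries.X ^ e ∣ aeval (expansionPoint z).val f) : cyclotomic d ℚ ^ e ∣ f := by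
  induction e generalizing f with
  | zero => simp
  | succ e ih =>
    obtain ⟨g, rfl⟩ := (X_dvd_aeval_expansionPoint_iff hz hd).1
      ((dvd_pow_self _ e.succ_ne_zero).trans h)
    rw [pow_succ', map_mul, ← ((associated_X_aeval_expansionPoint_cyclotomic hz hd).mul_right
      _).dvd_iff_dvd_right] at h
    rw [pow_succ']
    exact mul_dvd_mul_left _ (ih ((mul_dvd_mul_iff_left PowerSeries.X_ne_zero).1 h))

lemma cyclotomic_pow_dvd_num (hz : IsPrimitiveRoot z d) (hd : 0 < d) {f : RatFunc ℚ} {N B : ℚ[X]}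
    (hf : algebraMap _ _ B * f = algebraMap _ _ N) (hB : aeval (expansionPoint z).val B ≠ 0)
    (hN : PowerSeries.X ^ e * aeval (expansionPoint z).val B ∣ aeval (expansionPoint z).val N) :
    cyclotomic d ℚ ^ e ∣ f.num := by
  have cross : f.num * B = N * f.denom := by
    have B_ne : B ≠ 0 := by
      rintro rfl
      exact hB (map_zero _)
    rw [RatFunc.num_mul_eq_mul_denom_iff B_ne, ← hf, mul_div_cancel_left₀]
    exact RatFunc.algebraMap_ne_zero B_ne
  refine cyclotomic_pow_dvd_of_X_pow_dvd hz hd ?_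
  rw [← mul_dvd_mul_iff_right hB, ← map_mul, cross, map_mul]
  exact hN.mul_right _

lemma geom_sum_mul_cyclotomic_pow_dvd {n : ℕ} (hn : 1 < n) {f : ℚ[X]} {e : ℕ}
    (hf : ∀ d, d ∣ n → 1 < d → cyclotomic d ℚ ^ (if d = n then e + 1 else 1) ∣ f) :
    (∑ i ∈ range n, X ^ i) * cyclotomic n ℚ ^ e ∣ f := by
  have factorization : ∏ d ∈ n.divisors.erase 1, cyclotomic d ℚ ^ (if d = n then e + 1 else 1) =
      (∑ i ∈ range n, X ^ i) * cyclotomic n ℚ ^ e := by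
    have split (d : ℕ) : cyclotomic d ℚ ^ (if d = n then e + 1 else 1) =
        cyclotomic d ℚ * if d = n then cyclotomic d ℚ ^ e else 1 := by
      split_ifs <;> ring
    have mem : n ∈ n.divisors.erase 1 :=
      mem_erase.2 ⟨hn.ne', Nat.mem_divisors_self n (by omega)⟩
    rw [prod_congr rfl fun d _ ↦ split d, prod_mul_distrib, prod_ite_eq', if_pos mem,
      prod_cyclotomic_eq_geom_sum (by omega)]
  rw [← factorization]
  refine prod_dvd_of_coprime (fun c _ d _ hcd ↦ (cyclotomic.isCoprime_rat hcd).pow) fun d hd ↦ ?_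
  obtain ⟨hd1, hd⟩ := mem_erase.1 hd
  have := Nat.pos_of_mem_divisors hd
  exact hf d (Nat.dvd_of_mem_divisors hd) (by omega)

end Globalization

section RationalFunctions

open Polynomial

lemma qint_natCast (k : ℕ) : qint k = (1 - q ^ k) / (1 - q) := by
  rw [qint, zpow_natCast]

lemma qpoch_eq_shiftedFact (x b : RatFunc ℚ) (m : ℕ) : qpoch x b m = shiftedFact x b m :=
  rfl

lemma one_sub_q_pow_ne_zero {k : ℕ} (hk : k ≠ 0) : 1 - q ^ k ≠ 0 := by
  rw [q, ← RatFunc.algebraMap_X, ← map_pow, ← map_one (algebraMap ℚ[X] _), ← map_sub, ← neg_sub]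
  exact RatFunc.algebraMap_ne_zero (neg_ne_zero.2 (X_pow_sub_C_ne_zero (pos_of_ne_zero hk) 1))

lemma one_sub_q_ne_zero : 1 - q ≠ 0 :=
  pow_one q ▸ one_sub_q_pow_ne_zero one_ne_zero

lemma shiftedFact_q_pow_three_ne_zero (k : ℕ) : shiftedFact (q ^ 3) (q ^ 3) k ≠ 0 := by
  refine prod_ne_zero_iff.2 fun i _ ↦ ?_
  rw [← pow_succ', ← pow_mul]
  exact one_sub_q_pow_ne_zero (by omega)

lemma wpSum_q (M : ℕ) :
    wpSum q (q ^ 3) 1 M = (1 - q) * qpoch (q ^ 3) (q ^ 3) M ^ 6 *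
      ∑ k ∈ range (M + 1), qint (6 * k + 1) *
        (qpoch q (q ^ 3) k ^ 6 / qpoch (q ^ 3) (q ^ 3) k ^ 6) * q ^ (3 * k) := by
  have sum := pow_mul_wpSum_one (a := q) (p := q ^ 3) (c := 1)
    (ρ := fun k ↦ qpoch q (q ^ 3) k / qpoch (q ^ 3) (q ^ 3) k) (m := M) fun k _ ↦ by
      rw [one_mul]
      exact (mul_div_cancel₀ _ (shiftedFact_q_pow_three_ne_zero k)).symm
  rw [one_pow, one_mul] at sum
  rw [sum, mul_comm (1 - q), mul_assoc, mul_sum (a := 1 - q)]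
  refine congrArg _ (sum_congr rfl fun k _ ↦ ?_)
  have hqint : qint (6 * k + 1) = (1 - q ^ (6 * k + 1)) / (1 - q) := mod_cast qint_natCast _
  rw [hqint, div_pow]
  field_simp [one_sub_q_ne_zero]
  ring

lemma truncDefect_q {h M : ℕ} (hM : 2 * h + 1 ≤ M) :
    truncDefect q h M = (1 - q) * qpoch (q ^ 3) (q ^ 3) M ^ 6 *
      (∑ k ∈ range (M + 1), qint (6 * k + 1) *
        (qpoch q (q ^ 3) k ^ 6 / qpoch (q ^ 3) (q ^ 3) k ^ 6) * q ^ (3 * k) -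
      5 * qint (2 * (3 * h + 2 : ℕ)) * (qpoch (q ^ 2) (q ^ 3) (2 * h + 1) ^ 3 /
        qpoch (q ^ 3) (q ^ 3) (2 * h + 1) ^ 3)) := by
  have fact_ne := shiftedFact_q_pow_three_ne_zero (2 * h + 1)
  have hqint : qint (2 * (3 * h + 2 : ℕ)) = (1 - q ^ (6 * h + 4)) / (1 - q) := by
    rw [← qint_natCast]
    push_cast
    ring_nf
  rw [truncDefect, wpSum_q, mul_sub, hqint]
  simp only [qpoch_eq_shiftedFact, ← shiftedFact_self_pow_mul_prod_Ico (q ^ 3) hM]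
  field_simp [one_sub_q_ne_zero]

lemma cyclotomic_pow_dvd_num_of_truncDefect_q {K : Type*} [Field K] [CharZero K] {z : Kˣ}
    {d e h M : ℕ} (hz : IsPrimitiveRoot z d) (hd : 1 < d) {f : RatFunc ℚ}
    (hf : truncDefect q h M = (1 - q) * qpoch (q ^ 3) (q ^ 3) M ^ 6 * f)
    (hX : PowerSeries.X ^ e *
        shiftedFact ((expansionPoint z).val ^ 3) ((expansionPoint z).val ^ 3) M ^ 6 ∣
      truncDefect (expansionPoint z).val h M) :
    cyclotomic d ℚ ^ e ∣ f.num := by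
  have one_sub_unit : IsUnit (1 - (expansionPoint z).val) := by
    rw [← pow_one (expansionPoint z).val]
    exact isUnit_one_sub_expansionPoint_pow (hz.pow_ne_one_of_pos_of_lt one_ne_zero hd)
  set B : ℚ[X] := (1 - X) * shiftedFact (X ^ 3) (X ^ 3) M ^ 6
  have aeval_B : aeval (expansionPoint z).val B =
      (1 - (expansionPoint z).val) *
        shiftedFact ((expansionPoint z).val ^ 3) ((expansionPoint z).val ^ 3) M ^ 6 := by
    simp only [B, ← AlgHom.coe_toRingHom, map_mul, map_sub, map_one, map_pow, map_shiftedFact]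
    simp only [AlgHom.coe_toRingHom, aeval_X]
  refine cyclotomic_pow_dvd_num hz (by omega) (N := truncDefect X h M) (B := B) ?_ ?_ ?_
  · simp only [B, map_truncDefect, map_mul, map_sub, map_one, map_pow, map_shiftedFact,
      RatFunc.algebraMap_X]
    exact hf.symm
  · rw [aeval_B]
    exact mul_ne_zero one_sub_unit.ne_zero
      (pow_ne_zero 6 (shiftedFact_expansionPoint_ne_zero hz three_pos M))
  · rw [aeval_B, mul_left_comm, one_sub_unit.mul_left_dvd, ← AlgHom.coe_toRingHom,
      map_truncDefect, AlgHom.coe_toRingHom, aeval_X]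
    exact hX

end RationalFunctions

theorem stmt2 (n : ℕ) (hpos : 0 < n) (hmod : n % 3 = 2) (M : ℕ)
    (hM : M = (2 * n - 1) / 3 ∨ M = n - 1) :
    qcong
      (∑ k ∈ Finset.range (M + 1),
        qint (6 * k + 1) * (qpoch q (q ^ 3) k ^ 6 / qpoch (q ^ 3) (q ^ 3) k ^ 6) *
          q ^ (3 * k))
      (5 * qint (2 * n) *
        (qpoch (q ^ 2) (q ^ 3) ((2 * n - 1) / 3) ^ 3 /
          qpoch (q ^ 3) (q ^ 3) ((2 * n - 1) / 3) ^ 3))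
      ((∑ i ∈ Finset.range n, Polynomial.X ^ i) * Polynomial.cyclotomic n ℚ ^ 5) := by
  obtain ⟨h, rfl⟩ : ∃ h, n = 3 * h + 2 := ⟨n / 3, by omega⟩
  rw [show (2 * (3 * h + 2) - 1) / 3 = 2 * h + 1 by omega] at hM ⊢
  refine qcong_of_dvd_num (geom_sum_mul_cyclotomic_pow_dvd (by omega) fun d hdn hd ↦ ?_)
  have hz := (Complex.isPrimitiveRoot_exp d (by omega)).isUnit_unit (by omega)
  refine cyclotomic_pow_dvd_num_of_truncDefect_q hz hd (truncDefect_q (by omega)) ?_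
  split_ifs with heq
  · subst heq
    exact X_pow_six_mul_shiftedFact_dvd_truncDefect hz (by omega) (by omega)
  · rw [pow_one]
    refine X_mul_shiftedFact_dvd_truncDefect hz hdn (by omega) ?_
    obtain rfl | rfl := hM
    · exact le_rfl
    · obtain ⟨c, hc⟩ := hdn
      rw [hc, Nat.mul_sub_mod (x := 0) (by omega)]
      exact Nat.le_sub_one_of_lt (Nat.mod_lt _ (by omega))
end

section
/- Let p be an odd prime, s a positive integer, and let m = (p^s - 1)/2 or m = p^s - 1. Then, modulo p^{s+4}, the sum S = sum_{k=0}^{m} (-1)^k (4k+1) (1/2)_k^5 / (k!)^5 satisfies: if p^s ≡ 1 (mod 4), S ≡ ((1/2)_{(p^s-1)/4}^2 / (1)_{(p^s-1)/4}^2) * ( p^s + (p^{3s}/4) H_{(p^s-1)/2}^{(2)} - (p^{3s}/8) H_{(p^s-1)/4}^{(2)} ); and if p^s ≡ 3 (mod 4), S ≡ p^{2s} (3/4)_{(p^s-1)/2} / (5/4)_{(p^s-1)/2}. -/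
open Finset

/-- Rising factorial `(x)_k = x(x+1)⋯(x+k-1)`. -/
def poch (x : ℚ) (k : ℕ) : ℚ := ∏ i ∈ Finset.range k, (x + i)

/-- `a ≡ b (mod p^m)`: the `p`-adic valuation of `a - b` is at least `m`. -/
def pcong (p : ℕ) (m : ℕ) (a b : ℚ) : Prop :=
  a = b ∨ (m : ℤ) ≤ padicValRat p (a - b)

/-- Generalized harmonic number `H_m^{(ℓ)} = ∑_{k=1}^m 1/k^ℓ`. -/
def harm (m ℓ : ℕ) : ℚ := ∑ k ∈ Finset.Icc 1 m, 1 / (k : ℚ) ^ ℓ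

/-!
Up to a factor `2`, the summand is `v(k) U₀(k)²`, where `v` is the very-well-poised weight of
parameter `1/2` and `U_w` is the well-poised quotient with parameters `1/2 - w` and `1/2 + w`. At
`w = p ^ s / 2` the quotient `U_w` terminates, so that Whipple's transformation evaluates `∑ v U_w²`
and `∑ v U_w U₀` by summable `₃F₂` series. As `U₀² = 2 U_w U₀ - U_w² + (U_w - U₀)²`, it remains to
see that `∑ v (U_w - U₀)²` vanishes modulo `p ^ (s + 4)`. Saalschütz's theorem expands `U_w` in a
basis whose products have `p`-integral structure constants and whose weighted sums are divisible by
`p ^ s`; the coefficients are even functions of the numbers `w / (i + 1)`, all divisible by `p`, so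
those of `U_w - U₀` are divisible by `p ^ 2`.
-/

section Pochhammer

lemma poch_zero (x : ℚ) : poch x 0 = 1 := prod_range_zero _

lemma poch_succ (x : ℚ) (k : ℕ) : poch x (k + 1) = poch x k * (x + k) := prod_range_succ _ _

lemma poch_add (x : ℚ) (k l : ℕ) : poch x (k + l) = poch x k * poch (x + k) l := by
  simp only [poch, prod_range_add, Nat.cast_add, add_assoc]

lemma poch_succ_left (x : ℚ) (k : ℕ) : poch x (k + 1) = x * poch (x + 1) k := by
  rw [add_comm, poch_add, poch_succ, poch_zero, Nat.cast_zero, Nat.cast_one, add_zero, one_mul]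

lemma poch_ne_zero {x : ℚ} (hx : ∀ i : ℕ, x + i ≠ 0) (k : ℕ) : poch x k ≠ 0 :=
  prod_ne_zero_iff.2 fun i _ ↦ hx i

lemma poch_one (k : ℕ) : poch 1 k = (k.factorial : ℚ) := by
  simp only [poch, ← prod_range_add_one_eq_factorial, Nat.cast_prod, Nat.cast_add, Nat.cast_one,
    add_comm]

lemma poch_one_sub_sub (x : ℚ) (k : ℕ) : poch (1 - x - k) k = (-1) ^ k * poch x k := by
  induction k with
  | zero => simp [poch_zero]
  | succ k ih =>
    rw [poch_succ_left, poch_succ x, Nat.cast_succ,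
      show 1 - x - (k + 1 : ℚ) + 1 = 1 - x - k by ring, ih]
    ring

lemma poch_sub_mul_poch_add (x y : ℚ) (k : ℕ) :
    poch (x - y) k * poch (x + y) k = ∏ i ∈ range k, ((x + i) ^ 2 - y ^ 2) := by
  rw [poch, poch, ← prod_mul_distrib]
  exact prod_congr rfl fun i _ ↦ by ring

lemma poch_sub_mul_poch_add_eq_sq_mul_prod {x : ℚ} (hx : ∀ i : ℕ, x + i ≠ 0) (y : ℚ) (k : ℕ) :
    poch (x - y) k * poch (x + y) k =
      poch x k ^ 2 * ∏ i ∈ range k, (1 - (y / (x + i)) ^ 2) := by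
  rw [poch_sub_mul_poch_add, poch, ← prod_pow, ← prod_mul_distrib]
  refine prod_congr rfl fun i _ ↦ ?_
  field_simp [hx i]

lemma poch_neg_natCast_self (n : ℕ) : poch (-n) n = (-1) ^ n * n.factorial := by
  rw [← poch_one, ← poch_one_sub_sub, sub_self, zero_sub]

lemma poch_neg_natCast_of_lt {n k : ℕ} (h : n < k) : poch (-n) k = 0 :=
  prod_eq_zero (mem_range.2 h) (neg_add_cancel _)

lemma factorial_succ_cast (n : ℕ) : ((n + 1).factorial : ℚ) = (n + 1) * n.factorial := by
  push_cast [Nat.factorial_succ]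
  rfl

end Pochhammer

section Choose

lemma choose_succ_mul_sub (n k : ℕ) :
    ((n + 1).choose k : ℚ) * (n + 1 - k) = (n + 1) * n.choose k := by
  rcases lt_or_ge (n + 1) k with h | h
  · simp [Nat.choose_eq_zero_of_lt h, Nat.choose_eq_zero_of_lt (Nat.lt_of_succ_lt h)]
  · have key := Nat.choose_mul_succ_eq n k
    qify [h] at key
    linear_combination -key

lemma choose_succ_succ_mul (n k : ℕ) :
    ((n + 1).choose (k + 1) : ℚ) * (k + 1) = (n + 1) * n.choose k := by
  exact_mod_cast (Nat.add_one_mul_choose_eq n k).symm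

lemma choose_succ_right_mul (n k : ℕ) :
    (n.choose (k + 1) : ℚ) * (k + 1) = n.choose k * (n - k) := by
  rcases lt_or_ge n k with h | h
  · simp [Nat.choose_eq_zero_of_lt h, Nat.choose_eq_zero_of_lt (Nat.lt_succ_of_lt h)]
  · have key := Nat.choose_succ_right_eq n k
    qify [h] at key
    exact key

end Choose

section WellPoisedBasis

/-- The polynomials `(-1)^j (-k)_j (a+k)_j / j!²` of degree `j` in `k (k + a)`, the basis in which
well-poised quotients are expanded. -/
def wpBasis (a : ℚ) (k j : ℕ) : ℚ := k.choose j * poch (a + k) j / j.factorial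

lemma wpBasis_zero_right (a : ℚ) (k : ℕ) : wpBasis a k 0 = 1 := by simp [wpBasis, poch_zero]

lemma wpBasis_eq_zero_of_lt (a : ℚ) {k j : ℕ} (h : k < j) : wpBasis a k j = 0 := by
  simp [wpBasis, Nat.choose_eq_zero_of_lt h]

lemma wpBasis_succ_right (a : ℚ) (k j : ℕ) :
    ((j : ℚ) + 1) ^ 2 * wpBasis a k (j + 1) = (k - j) * (k + j + a) * wpBasis a k j := by
  rw [wpBasis, wpBasis, poch_succ, factorial_succ_cast]
  field_simp
  linear_combination poch (a + k) j * (a + k + j) * choose_succ_right_mul k j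

lemma wpBasis_succ_param (a : ℚ) (k j : ℕ) :
    (a + k) * wpBasis (a + 1) k j = (a + k + j) * wpBasis a k j := by
  have hpoch : (a + k) * poch (a + 1 + k) j = poch (a + k) j * (a + k + j) := by
    rw [← poch_succ, poch_succ_left, add_right_comm]
  simp only [wpBasis]
  linear_combination k.choose j / (j.factorial : ℚ) * hpoch

lemma wpBasis_succ_param_left (a : ℚ) (k j : ℕ) :
    ((k : ℚ) + 1) * wpBasis (a + 1) k j = (k + 1 - j) * wpBasis a (k + 1) j := by
  simp only [wpBasis, Nat.cast_succ, ← add_assoc, add_right_comm a 1]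
  linear_combination -poch (a + k + 1) j / (j.factorial : ℚ) * choose_succ_mul_sub k j

/-- The coefficient of `wpBasis a · n` in the product of `wpBasis a · i` and `wpBasis a · j`, for
`n ≤ i + j`. -/
def wpLinCoeff (a : ℚ) (i j n : ℕ) : ℚ :=
  n.choose i * n.choose j * (poch (a + n) (i + j - n) / (i + j - n).factorial)

lemma wpLinCoeff_zero_right (a : ℚ) (i j : ℕ) : (j : ℚ) * (a + j) * wpLinCoeff a i j 0 = 0 := by
  cases j <;> simp [wpLinCoeff]

lemma wpLinCoeff_succ_zero (a : ℚ) (i j : ℕ) : wpLinCoeff a i (j + 1) 0 = 0 := by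
  simp [wpLinCoeff]

lemma wpLinCoeff_succ_last (a : ℚ) (i j : ℕ) :
    ((j : ℚ) + 1) ^ 2 * wpLinCoeff a i (j + 1) (i + j + 1) =
      ((i : ℚ) + j + 1) ^ 2 * wpLinCoeff a i j (i + j) := by
  have hi := choose_succ_mul_sub (i + j) i
  have hj := choose_succ_succ_mul (i + j) j
  simp only [wpLinCoeff, ← add_assoc, Nat.sub_self, poch_zero, Nat.factorial_zero, Nat.cast_one,
    div_one, mul_one]
  push_cast at hi hj ⊢
  linear_combination ((i + j + 1).choose i : ℚ) * (j + 1) * hj +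
    (i + j + 1) * ((i + j).choose j : ℚ) * hi

lemma wpLinCoeff_succ_succ (a : ℚ) {i j n : ℕ} (h : n < i + j) :
    ((j : ℚ) + 1) ^ 2 * wpLinCoeff a i (j + 1) (n + 1) =
      ((n : ℚ) + 1) ^ 2 * wpLinCoeff a i j n +
        ((n + 1 : ℚ) - j) * (n + 1 + j + a) * wpLinCoeff a i j (n + 1) := by
  obtain ⟨t, ht⟩ := Nat.exists_eq_add_of_lt h
  have htq : (i : ℚ) + j = n + t + 1 := by exact_mod_cast ht
  have hi := choose_succ_mul_sub n i
  have hj := choose_succ_mul_sub n j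
  have hjj := choose_succ_succ_mul n j
  simp only [wpLinCoeff, show i + (j + 1) - (n + 1) = t + 1 by omega,
    show i + j - (n + 1) = t by omega, show i + j - n = t + 1 by omega]
  rw [poch_succ (a + (n + 1 : ℕ)), poch_succ_left (a + n), factorial_succ_cast, Nat.cast_succ,
    ← add_assoc]
  field_simp
  linear_combination poch (a + n + 1) t * (
    (j + 1) * (n + 1).choose i * (a + n + 1 + t) * hjj + (n + 1) * n.choose j * (a + n) * hi -
      (a + n + 1 + j) * (n + 1).choose i * (t + 1) * hj +
      (n + 1) * n.choose j * (n + 1).choose i * (a + n) * htq)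

lemma sum_wpLinCoeff_succ_mul (a : ℚ) (i j : ℕ) (f : ℕ → ℚ) :
    ∑ n ∈ range (i + j + 2), ((j : ℚ) + 1) ^ 2 * (wpLinCoeff a i (j + 1) n * f n) =
      ∑ n ∈ range (i + j + 1), ((n : ℚ) + 1) ^ 2 * wpLinCoeff a i j n * f (n + 1) +
        ∑ n ∈ range (i + j + 1), (n - j) * (n + j + a) * wpLinCoeff a i j n * f n := by
  have middle : ∑ n ∈ range (i + j),
        ((j : ℚ) + 1) ^ 2 * (wpLinCoeff a i (j + 1) (n + 1) * f (n + 1)) =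
      ∑ n ∈ range (i + j), ((n : ℚ) + 1) ^ 2 * wpLinCoeff a i j n * f (n + 1) +
        ∑ n ∈ range (i + j), ((n + 1 : ℚ) - j) * (n + 1 + j + a) *
          wpLinCoeff a i j (n + 1) * f (n + 1) := by
    rw [← sum_add_distrib]
    refine sum_congr rfl fun n hn ↦ ?_
    linear_combination f (n + 1) * wpLinCoeff_succ_succ a (mem_range.1 hn)
  rw [sum_range_succ, sum_range_succ' (n := i + j), sum_range_succ (n := i + j),
    sum_range_succ' (n := i + j), wpLinCoeff_succ_zero]
  push_cast
  linear_combination middle + f (i + j + 1) * wpLinCoeff_succ_last a i j +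
    f 0 * wpLinCoeff_zero_right a i j

lemma wpBasis_mul (a : ℚ) (k i j : ℕ) :
    wpBasis a k i * wpBasis a k j =
      ∑ n ∈ range (i + j + 1), wpLinCoeff a i j n * wpBasis a k n := by
  induction j with
  | zero =>
    rw [wpBasis_zero_right, mul_one, sum_eq_single_of_mem i (by simp)]
    · simp [wpLinCoeff, poch_zero]
    · intro n hn hni
      have : n < i := by have := mem_range.1 hn; omega
      simp [wpLinCoeff, Nat.choose_eq_zero_of_lt this]
  | succ j ih =>
    have raise (n : ℕ) : ((k : ℚ) - j) * (k + j + a) * wpBasis a k n =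
        ((n : ℚ) + 1) ^ 2 * wpBasis a k (n + 1) + (n - j) * (n + j + a) * wpBasis a k n := by
      linear_combination -wpBasis_succ_right a k n
    refine mul_left_cancel₀ (pow_ne_zero 2 (Nat.cast_add_one_ne_zero j)) ?_
    calc ((j : ℚ) + 1) ^ 2 * (wpBasis a k i * wpBasis a k (j + 1))
      _ = ∑ n ∈ range (i + j + 1),
            wpLinCoeff a i j n * ((k - j) * (k + j + a) * wpBasis a k n) := by
          rw [mul_left_comm, wpBasis_succ_right, mul_left_comm, ih, mul_sum]
          exact sum_congr rfl fun n _ ↦ by ring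
      _ = ∑ n ∈ range (i + j + 1), ((n : ℚ) + 1) ^ 2 * wpLinCoeff a i j n * wpBasis a k (n + 1) +
            ∑ n ∈ range (i + j + 1),
              (n - j) * (n + j + a) * wpLinCoeff a i j n * wpBasis a k n := by
          rw [← sum_add_distrib]
          exact sum_congr rfl fun n _ ↦ by rw [raise]; ring
      _ = _ := by rw [← sum_wpLinCoeff_succ_mul, mul_sum]; rfl

end WellPoisedBasis

section VeryWellPoised

/-- The very-well-poised weights `a (1 + a/2)_k / (a/2)_k · (-1)^k (a)_k / k!`, with the factor `a`
and the quotient of Pochhammer symbols combined into `a + 2k`. -/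
def vwpWeight (a : ℚ) (k : ℕ) : ℚ := (-1) ^ k * (a + 2 * k) * poch a k / k.factorial

/-- The well-poised quotient `(b)_k (c)_k / ((1+a-b)_k (1+a-c)_k)`. -/
def wellPoised (a b c : ℚ) (k : ℕ) : ℚ :=
  poch b k * poch c k / (poch (1 + a - b) k * poch (1 + a - c) k)

lemma wellPoised_zero (a b c : ℚ) : wellPoised a b c 0 = 1 := by simp [wellPoised, poch_zero]

lemma wellPoised_succ {a b c : ℚ} (hb : ∀ i : ℕ, 1 + a - b + i ≠ 0)
    (hc : ∀ i : ℕ, 1 + a - c + i ≠ 0) (k : ℕ) :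
    (1 + a - b + k) * (1 + a - c + k) * wellPoised a b c (k + 1) =
      (b + k) * (c + k) * wellPoised a b c k := by
  have := poch_ne_zero hb k
  have := poch_ne_zero hc k
  have := hb k
  have := hc k
  simp only [wellPoised, poch_succ]
  field_simp

lemma wellPoised_neg_natCast_of_lt (a c : ℚ) {n k : ℕ} (h : n < k) :
    wellPoised a (-n) c k = 0 := by
  simp [wellPoised, poch_neg_natCast_of_lt h]

lemma sum_vwpWeight_mul_wpBasis (a : ℚ) (m j : ℕ) :
    ∑ k ∈ range (m + 1), vwpWeight a k * wpBasis a k j =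
      (-1) ^ m * (poch a (m + 1) / m.factorial) * wpBasis (a + 1) m j := by
  induction m with
  | zero => cases j <;> simp [vwpWeight, wpBasis, poch_succ, poch_zero]
  | succ m ih =>
    have hleft := wpBasis_succ_param_left a m j
    have hright := wpBasis_succ_param a (m + 1) j
    push_cast at hright
    rw [sum_range_succ, ih, vwpWeight, poch_succ a (m + 1), factorial_succ_cast]
    push_cast
    field_simp
    linear_combination (-1) ^ m * poch a (m + 1) * (hleft + hright)

lemma sum_vwpWeight_mul_wellPoised_mul_wpBasis {a b c : ℚ} (hb : ∀ i : ℕ, 1 + a - b + i ≠ 0)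
    (hc : ∀ i : ℕ, 1 + a - c + i ≠ 0) (m j : ℕ) :
    ∑ k ∈ range (m + 1), vwpWeight a k * wellPoised a b c k *
        (((k - j) * (k + j + a) + (b + j) * (c + j)) * wpBasis a k j) =
      (-1) ^ m * (poch a m / m.factorial) * ((b + m) * (c + m) * wellPoised a b c m) *
        ((a + m + j) * wpBasis a m j) := by
  induction m with
  | zero =>
    rcases j.eq_zero_or_pos with rfl | hj
    · rw [zero_add, sum_range_one, vwpWeight, wellPoised_zero, wpBasis_zero_right, poch_zero]
      push_cast
      ring
    · simp [wpBasis_eq_zero_of_lt a hj]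
  | succ m ih =>
    have hleft := wpBasis_succ_param_left a m j
    have hratio : poch a m / m.factorial * (a + m) =
        (m + 1) * (poch a (m + 1) / (m + 1).factorial) := by
      rw [poch_succ, factorial_succ_cast]
      field_simp
    rw [sum_range_succ, ih, ← wellPoised_succ hb hc, ← wpBasis_succ_param, vwpWeight, mul_div_assoc]
    push_cast
    linear_combination (-1) ^ m * (1 + a - b + m) * (1 + a - c + m) * wellPoised a b c (m + 1) *
      (wpBasis (a + 1) m j * hratio + poch a (m + 1) / (m + 1).factorial * hleft)

/-- The partial sum up to `m` of the very-well-poised `₅F₄` series with parameters `-n` and `e`,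
weighted by the basis polynomial of index `j`. -/
def vwpMoment (a e : ℚ) (n m j : ℕ) : ℚ :=
  ∑ k ∈ range (m + 1), vwpWeight a k * wellPoised a (-n) e k * wpBasis a k j

lemma vwpMoment_succ {a e : ℚ} {n m : ℕ} (hnm : n ≤ m) (hn : ∀ i : ℕ, 1 + a + n + i ≠ 0)
    (he : ∀ i : ℕ, 1 + a - e + i ≠ 0) (j : ℕ) :
    ((j : ℚ) + 1) ^ 2 * vwpMoment a e n m (j + 1) = (n - j) * (e + j) * vwpMoment a e n m j := by
  have boundary : ((-n + m : ℚ)) * (e + m) * wellPoised a (-n) e m = 0 := by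
    rcases hnm.eq_or_lt with rfl | hlt
    · simp
    · rw [wellPoised_neg_natCast_of_lt a e hlt, mul_zero]
  have telescoped := sum_vwpWeight_mul_wellPoised_mul_wpBasis (b := -n) (c := e)
    (fun i ↦ by simpa using hn i) he m j
  rw [boundary, mul_zero, zero_mul] at telescoped
  rw [vwpMoment, vwpMoment, mul_sum, mul_sum, ← sub_eq_zero, ← sum_sub_distrib, ← telescoped]
  refine sum_congr rfl fun k _ ↦ ?_
  linear_combination vwpWeight a k * wellPoised a (-n) e k * wpBasis_succ_right a k j

lemma vwpMoment_self {a e : ℚ} {n m : ℕ} (hnm : n ≤ m) (hn : ∀ i : ℕ, 1 + a + n + i ≠ 0)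
    (he : ∀ i : ℕ, 1 + a - e + i ≠ 0) :
    vwpMoment a e n m n = poch a (n + 1) / poch (1 + a - e) n * (poch e n / n.factorial) := by
  rw [vwpMoment, sum_eq_single_of_mem n (mem_range.2 (by omega))]
  · have key : poch (a + n) n * (a + 2 * n) = (a + n) * poch (1 + a + n) n := by
      rw [show 1 + a + (n : ℚ) = a + n + 1 by ring, ← poch_succ_left, poch_succ]
      ring
    have := poch_ne_zero hn n
    have := poch_ne_zero he n
    have sign : ((-1 : ℚ) ^ n) ^ 2 = 1 := by rw [← pow_mul, mul_comm, pow_mul]; simp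
    simp only [vwpWeight, wellPoised, wpBasis, poch_neg_natCast_self, Nat.choose_self,
      sub_neg_eq_add, poch_succ a]
    field_simp
    linear_combination poch a n * poch e n * (key + (a + 2 * n) * poch (a + n) n * sign)
  · intro k _ hkn
    rcases hkn.lt_or_gt with h | h
    · rw [wpBasis_eq_zero_of_lt a h, mul_zero]
    · rw [wellPoised_neg_natCast_of_lt a e h, mul_zero, zero_mul]

lemma vwpMoment_eq {a e : ℚ} {n m : ℕ} (hnm : n ≤ m) (hn : ∀ i : ℕ, 1 + a + n + i ≠ 0)
    (he : ∀ i : ℕ, e + i ≠ 0) (he' : ∀ i : ℕ, 1 + a - e + i ≠ 0) {j : ℕ} (hj : j ≤ n) :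
    vwpMoment a e n m j =
      poch a (n + 1) / poch (1 + a - e) n * (n.choose j * poch e j / j.factorial) := by
  induction hj using Nat.decreasingInduction with
  | self => rw [vwpMoment_self hnm hn he', Nat.choose_self, Nat.cast_one, one_mul]
  | of_succ j hj ih =>
    have hnj : (n : ℚ) - j ≠ 0 := sub_ne_zero.2 (by exact_mod_cast hj.ne')
    refine mul_left_cancel₀ (mul_ne_zero hnj (he j)) ?_
    rw [← vwpMoment_succ hnm hn he', ih, poch_succ e, factorial_succ_cast]
    field_simp
    linear_combination poch a (n + 1) / poch (1 + a - e) n * poch e j * (e + j) *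
      choose_succ_right_mul n j

end VeryWellPoised

section Saalschutz

/-- The coefficients of a well-poised quotient in the basis `wpBasis`. -/
def saalCoeff (g c d : ℚ) (j : ℕ) : ℚ :=
  (-1) ^ j * j.factorial * poch g j / (poch c j * poch d j)

lemma saalCoeff_zero (g c d : ℚ) : saalCoeff g c d 0 = 1 := by simp [saalCoeff, poch_zero]

lemma saalCoeff_succ {c d : ℚ} (g : ℚ) (hc : ∀ i : ℕ, c + i ≠ 0) (hd : ∀ i : ℕ, d + i ≠ 0)
    (j : ℕ) :
    (c + j) * (d + j) * saalCoeff g c d (j + 1) = -((g + j) * (j + 1) * saalCoeff g c d j) := by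
  have := poch_ne_zero hc j
  have := poch_ne_zero hd j
  have := hc j
  have := hd j
  simp only [saalCoeff, poch_succ, factorial_succ_cast]
  field_simp
  ring

lemma sum_saalCoeff_mul_wpBasis_telescope {a g c d : ℚ} (hc : ∀ i : ℕ, c + i ≠ 0)
    (hd : ∀ i : ℕ, d + i ≠ 0) (hbal : c + d = a + g + 1) (k J : ℕ) :
    ∑ j ∈ range (J + 1), saalCoeff g c d j *
        ((c + k) * (d + k) * wpBasis a (k + 1) j - (c - g + k) * (d - g + k) * wpBasis a k j) =
      (2 * k + a + 1) * ((g + J) * saalCoeff g c d J * wpBasis (a + 1) k J) := by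
  obtain rfl : a = c + d - g - 1 := by linear_combination -hbal
  induction J with
  | zero =>
    simp only [zero_add, sum_range_one, saalCoeff_zero, wpBasis_zero_right, Nat.cast_zero, add_zero]
    ring
  | succ J ih =>
    have hcoeff := saalCoeff_succ g hc hd J
    have hk := wpBasis_succ_right (c + d - g - 1) k J
    have hk1 := wpBasis_succ_right (c + d - g - 1) (k + 1) J
    have hparam := wpBasis_succ_right (c + d - g - 1 + 1) k J
    have hleft := wpBasis_succ_param_left (c + d - g - 1) k J
    have hright := wpBasis_succ_param (c + d - g - 1) k J
    push_cast at hk1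
    rw [sum_range_succ, ih]
    refine mul_left_cancel₀ (pow_ne_zero 2 (Nat.cast_add_one_ne_zero J)) ?_
    push_cast
    linear_combination
      (2 * k + c + d - g) * (J + 1) * wpBasis (c + d - g - 1 + 1) k J * hcoeff +
      saalCoeff g c d (J + 1) * ((c + k) * (d + k) * (hk1 - (k + 1 + J + c + d - g - 1) * hleft) -
        (c - g + k) * (d - g + k) * (hk - (k - J) * hright) -
        (2 * k + c + d - g) * (g + J + 1) * hparam)

/-- Saalschütz's summation, read as the expansion of a well-poised quotient. -/
lemma wellPoised_eq_sum_saalCoeff {a b c : ℚ} (hb : ∀ i : ℕ, 1 + a - b + i ≠ 0)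
    (hc : ∀ i : ℕ, 1 + a - c + i ≠ 0) {k J : ℕ} (hk : k ≤ J) :
    wellPoised a b c k =
      ∑ j ∈ range (J + 1), saalCoeff (1 + a - b - c) (1 + a - b) (1 + a - c) j * wpBasis a k j := by
  induction k with
  | zero =>
    rw [wellPoised_zero, sum_range_succ', sum_eq_zero, saalCoeff_zero, wpBasis_zero_right]
    · norm_num
    · intro j _
      rw [wpBasis_eq_zero_of_lt a j.succ_pos, mul_zero]
  | succ k ih =>
    have telescoped := sum_saalCoeff_mul_wpBasis_telescope (a := a) (g := 1 + a - b - c) hb hc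
      (by ring) k J
    rw [wpBasis_eq_zero_of_lt (a + 1) hk, mul_zero, mul_zero] at telescoped
    refine mul_left_cancel₀ (mul_ne_zero (hb k) (hc k)) ?_
    rw [wellPoised_succ hb hc, ih (by omega), mul_sum, mul_sum, ← sub_eq_zero, ← sum_sub_distrib,
      ← neg_eq_zero, ← sum_neg_distrib, ← telescoped]
    exact sum_congr rfl fun j _ ↦ by ring

end Saalschutz

section Whipple

/-- Whipple's transformation of a terminating very-well-poised `₇F₆` into a balanced `₄F₃`. -/
lemma sum_vwpWeight_mul_wellPoised_mul_wellPoised {a b c e : ℚ} {n m : ℕ} (hnm : n ≤ m)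
    (hb : ∀ i : ℕ, 1 + a - b + i ≠ 0) (hc : ∀ i : ℕ, 1 + a - c + i ≠ 0)
    (hn : ∀ i : ℕ, 1 + a + n + i ≠ 0) (he : ∀ i : ℕ, e + i ≠ 0)
    (he' : ∀ i : ℕ, 1 + a - e + i ≠ 0) :
    ∑ k ∈ range (m + 1), vwpWeight a k * wellPoised a (-n) e k * wellPoised a b c k =
      poch a (n + 1) / poch (1 + a - e) n *
        ∑ j ∈ range (n + 1), saalCoeff (1 + a - b - c) (1 + a - b) (1 + a - c) j *
          (n.choose j * poch e j / j.factorial) := by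
  calc ∑ k ∈ range (m + 1), vwpWeight a k * wellPoised a (-n) e k * wellPoised a b c k
    _ = ∑ k ∈ range (m + 1), ∑ j ∈ range (n + 1),
          saalCoeff (1 + a - b - c) (1 + a - b) (1 + a - c) j *
            (vwpWeight a k * wellPoised a (-n) e k * wpBasis a k j) := by
        refine sum_congr rfl fun k _ ↦ ?_
        rcases le_or_gt k n with hk | hk
        · rw [wellPoised_eq_sum_saalCoeff hb hc hk, mul_sum]
          exact sum_congr rfl fun j _ ↦ mul_left_comm _ _ _
        · simp [wellPoised_neg_natCast_of_lt a e hk]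
    _ = ∑ j ∈ range (n + 1), saalCoeff (1 + a - b - c) (1 + a - b) (1 + a - c) j *
          vwpMoment a e n m j := by
        rw [sum_comm]
        exact sum_congr rfl fun j _ ↦ (mul_sum _ _ _).symm
    _ = _ := by
        rw [mul_sum]
        refine sum_congr rfl fun j hj ↦ ?_
        rw [vwpMoment_eq hnm hn he he' (Nat.lt_succ_iff.1 (mem_range.1 hj)), mul_left_comm]

/-- The terminating series `₃F₂(-n, n+1, c; e, f; 1)`, which Whipple's theorem evaluates when
`e + f = 2c + 1`. -/
def whippleSum (c e f : ℚ) (n : ℕ) : ℚ :=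
  ∑ j ∈ range (n + 1), saalCoeff c e f j * wpBasis 1 n j

lemma whippleSum_eq_sum_range (c e f : ℚ) {n N : ℕ} (h : n ≤ N) :
    whippleSum c e f n = ∑ j ∈ range (N + 1), saalCoeff c e f j * wpBasis 1 n j := by
  refine sum_subset (range_mono (by omega)) fun j _ hj ↦ ?_
  rw [wpBasis_eq_zero_of_lt 1 (by simpa using hj), mul_zero]

lemma sum_saalCoeff_mul_wpBasis_one_telescope {c e f : ℚ} (he : ∀ i : ℕ, e + i ≠ 0)
    (hf : ∀ i : ℕ, f + i ≠ 0) (hef : e + f = 2 * c + 1) (n J : ℕ) :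
    ∑ j ∈ range (J + 1), saalCoeff c e f j *
        ((e + n + 1) * (f + n + 1) * wpBasis 1 (n + 2) j -
          (e - n - 2) * (f - n - 2) * wpBasis 1 n j) =
      2 * (2 * n + 3) * ((c + J) * saalCoeff c e f J * wpBasis 1 (n + 1) J) := by
  obtain rfl : e = 2 * c + 1 - f := by linear_combination hef
  induction J with
  | zero =>
    simp only [zero_add, sum_range_one, saalCoeff_zero, wpBasis_zero_right, Nat.cast_zero, add_zero]
    ring
  | succ J ih =>
    have hcoeff := saalCoeff_succ c he hf J
    have shift (k : ℕ) : ((k : ℚ) + 1 - J) * wpBasis 1 (k + 1) J = (k + 1 + J) * wpBasis 1 k J := by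
      linear_combination wpBasis_succ_param 1 k J - wpBasis_succ_param_left 1 k J
    have hn := wpBasis_succ_right 1 n J
    have hn1 := wpBasis_succ_right 1 (n + 1) J
    have hn2 := wpBasis_succ_right 1 (n + 2) J
    have shift0 := shift n
    have shift1 := shift (n + 1)
    push_cast at hn1 hn2 shift1
    rw [sum_range_succ, ih]
    refine mul_left_cancel₀ (pow_ne_zero 2 (Nat.cast_add_one_ne_zero J)) ?_
    push_cast
    linear_combination
      2 * (2 * n + 3) * (J + 1) * wpBasis 1 (n + 1) J * hcoeff +
      saalCoeff c (2 * c + 1 - f) f (J + 1) *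
        ((2 * c + 1 - f + n + 1) * (f + n + 1) * (hn2 + (n + 3 + J) * shift1) -
          (2 * c + 1 - f - n - 2) * (f - n - 2) * (hn - (n - J) * shift0) -
          2 * (2 * n + 3) * (c + J + 1) * hn1)

lemma whippleSum_add_two {c e f : ℚ} (he : ∀ i : ℕ, e + i ≠ 0) (hf : ∀ i : ℕ, f + i ≠ 0)
    (hef : e + f = 2 * c + 1) (n : ℕ) :
    (e + n + 1) * (f + n + 1) * whippleSum c e f (n + 2) =
      (e - n - 2) * (f - n - 2) * whippleSum c e f n := by
  have telescoped := sum_saalCoeff_mul_wpBasis_one_telescope he hf hef n (n + 2)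
  rw [wpBasis_eq_zero_of_lt 1 (by omega : n + 1 < n + 2), mul_zero, mul_zero] at telescoped
  rw [whippleSum, whippleSum_eq_sum_range c e f (by omega : n ≤ n + 2), mul_sum, mul_sum,
    ← sub_eq_zero, ← sum_sub_distrib, ← telescoped]
  exact sum_congr rfl fun j _ ↦ by ring

lemma whippleSum_two_mul {c e f : ℚ} (he : ∀ i : ℕ, e + i ≠ 0) (hf : ∀ i : ℕ, f + i ≠ 0)
    (hef : e + f = 2 * c + 1) (q : ℕ) :
    whippleSum c e f (2 * q) =
      poch (1 - e / 2) q * poch (1 - f / 2) q /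
        (poch ((e + 1) / 2) q * poch ((f + 1) / 2) q) := by
  have half_ne {x : ℚ} (hx : ∀ i : ℕ, x + i ≠ 0) (i : ℕ) : (x + 1) / 2 + i ≠ 0 := fun h ↦
    hx (2 * i + 1) (by push_cast; linear_combination 2 * h)
  induction q with
  | zero => simp [whippleSum, saalCoeff_zero, wpBasis_zero_right, poch_zero]
  | succ q ih =>
    have step := whippleSum_add_two he hf hef (2 * q)
    have := poch_ne_zero (half_ne he) q
    have := poch_ne_zero (half_ne hf) q
    have he1 : e + 2 * q + 1 ≠ 0 := by simpa [add_assoc] using he (2 * q + 1)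
    have hf1 : f + 2 * q + 1 ≠ 0 := by simpa [add_assoc] using hf (2 * q + 1)
    push_cast at step
    refine mul_left_cancel₀ (mul_ne_zero he1 hf1) ?_
    rw [show 2 * (q + 1) = 2 * q + 2 from rfl, step, ih]
    simp only [poch_succ, show (e + 1) / 2 + (q : ℚ) = (e + 2 * q + 1) / 2 by ring,
      show (f + 1) / 2 + (q : ℚ) = (f + 2 * q + 1) / 2 by ring]
    field_simp
    ring

lemma whippleSum_two_mul_add_one {c e f : ℚ} (he : ∀ i : ℕ, e + i ≠ 0) (hf : ∀ i : ℕ, f + i ≠ 0)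
    (hef : e + f = 2 * c + 1) (q : ℕ) :
    whippleSum c e f (2 * q + 1) =
      poch ((1 - e) / 2) (q + 1) * poch ((1 - f) / 2) (q + 1) /
        (poch (e / 2) (q + 1) * poch (f / 2) (q + 1)) := by
  have half_ne {x : ℚ} (hx : ∀ i : ℕ, x + i ≠ 0) (i : ℕ) : x / 2 + i ≠ 0 := fun h ↦
    hx (2 * i) (by push_cast; linear_combination 2 * h)
  induction q with
  | zero =>
    have he0 : e ≠ 0 := by simpa using he 0
    have hf0 : f ≠ 0 := by simpa using hf 0
    have base : whippleSum c e f 1 = 1 - 2 * c / (e * f) := by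
      have coeff : saalCoeff c e f 1 = -(c / (e * f)) := by
        simp [saalCoeff, poch_succ, poch_zero, neg_div]
      have basis : wpBasis 1 1 1 = 2 := by norm_num [wpBasis, poch_succ, poch_zero]
      rw [whippleSum, sum_range_succ, sum_range_one, saalCoeff_zero, wpBasis_zero_right, coeff,
        basis]
      ring
    simp only [mul_zero, zero_add, base, poch_succ, poch_zero, Nat.cast_zero, add_zero, one_mul]
    field_simp
    linear_combination hef
  | succ q ih =>
    have step := whippleSum_add_two he hf hef (2 * q + 1)
    have := poch_ne_zero (half_ne he) (q + 1)
    have := poch_ne_zero (half_ne hf) (q + 1)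
    have he2 : e + 2 * q + 2 ≠ 0 := by simpa [add_assoc] using he (2 * q + 2)
    have hf2 : f + 2 * q + 2 ≠ 0 := by simpa [add_assoc] using hf (2 * q + 2)
    have step' : (e + 2 * q + 2) * (f + 2 * q + 2) * whippleSum c e f (2 * q + 1 + 2) =
        (e - 2 * q - 3) * (f - 2 * q - 3) * whippleSum c e f (2 * q + 1) := by
      push_cast at step
      linear_combination step
    refine mul_left_cancel₀ (mul_ne_zero he2 hf2) ?_
    rw [show 2 * (q + 1) + 1 = 2 * q + 1 + 2 from rfl, step', ih]
    simp only [poch_succ _ (q + 1), Nat.cast_succ,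
      show e / 2 + (q + 1 : ℚ) = (e + 2 * q + 2) / 2 by ring,
      show f / 2 + (q + 1 : ℚ) = (f + 2 * q + 2) / 2 by ring]
    field_simp
    ring

lemma sum_vwpWeight_mul_wellPoised_neg_natCast_mul_wellPoised {a b c : ℚ} {n m : ℕ} (hnm : n ≤ m)
    (ha : ∀ z : ℤ, a + z ≠ 0) (hb : ∀ i : ℕ, 1 + a - b + i ≠ 0) (hc : ∀ i : ℕ, 1 + a - c + i ≠ 0) :
    ∑ k ∈ range (m + 1), vwpWeight a k * wellPoised a (-n) (n + 1) k * wellPoised a b c k =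
      (-1) ^ n * (poch a (n + 1) / poch (1 - a) n) *
        whippleSum (1 + a - b - c) (1 + a - b) (1 + a - c) n := by
  rw [sum_vwpWeight_mul_wellPoised_mul_wellPoised hnm hb hc
    (fun i ↦ by convert ha (1 + n + i) using 1; push_cast; ring) (fun i ↦ by positivity)
    (fun i ↦ by convert ha (i - n) using 1; push_cast; ring)]
  have reflect : poch (1 + a - (n + 1)) n = (-1) ^ n * poch (1 - a) n := by
    rw [← poch_one_sub_sub]
    congr 1
    ring
  congr 1
  · rw [reflect, mul_comm, ← div_div, div_eq_mul_inv, ← inv_pow, inv_neg_one, mul_comm]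
  · exact sum_congr rfl fun j _ ↦ by rw [wpBasis, add_comm (n : ℚ)]

end Whipple

section PAdic

/-- The rationals of `p`-adic valuation at least `e`, so that `padicBall p 0` consists of the
`p`-integral rationals and `padicBall p e` is the modulus of congruences modulo `p ^ e`. -/
def padicBall (p : ℕ) [Fact p.Prime] (e : ℕ) : AddSubgroup ℚ :=
  (Rat.padicValuation p).leAddSubgroup (Rat.padicValuation p p ^ e)

variable {p : ℕ} [Fact p.Prime]

lemma pcong_of_sub_mem_padicBall {e : ℕ} {a b : ℚ} (h : a - b ∈ padicBall p e) :
    pcong p e a b := by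
  refine or_iff_not_imp_left.2 fun hab ↦ ?_
  rw [padicBall, Valuation.mem_leAddSubgroup_iff, Rat.padicValuation_self,
    ← WithZero.exp_nsmul] at h
  simpa [Rat.padicValuation, sub_eq_zero, hab, -WithZero.exp_neg] using h

lemma mul_mem_padicBall {d e : ℕ} {x y : ℚ} (hx : x ∈ padicBall p d) (hy : y ∈ padicBall p e) :
    x * y ∈ padicBall p (d + e) := by
  rw [padicBall, Valuation.mem_leAddSubgroup_iff] at *
  rw [map_mul, pow_add]
  exact mul_le_mul' hx hy

lemma mul_mem_padicBall_of_integral {e : ℕ} {x y : ℚ} (hx : x ∈ padicBall p e)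
    (hy : y ∈ padicBall p 0) : x * y ∈ padicBall p e :=
  mul_mem_padicBall hx hy

lemma padicBall_antitone : Antitone (padicBall p) := fun d e h ↦
  Valuation.leAddSubgroup_monotone _ <| pow_le_pow_right_of_le_one' (by
    simpa using Int.padicValuation_le_one p p) h

lemma intCast_mem_padicBall_zero (z : ℤ) : (z : ℚ) ∈ padicBall p 0 := by
  rw [padicBall, Valuation.mem_leAddSubgroup_iff, pow_zero, Rat.padicValuation_cast]
  exact Int.padicValuation_le_one p z

lemma neg_one_pow_mem_padicBall_zero (n : ℕ) : (-1 : ℚ) ^ n ∈ padicBall p 0 := by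
  exact_mod_cast intCast_mem_padicBall_zero (p := p) ((-1) ^ n)

lemma prime_pow_mem_padicBall (e : ℕ) : (p : ℚ) ^ e ∈ padicBall p e := by
  rw [padicBall, Valuation.mem_leAddSubgroup_iff, map_pow]

lemma mem_padicBall_zero_iff_norm {x : ℚ} : x ∈ padicBall p 0 ↔ ‖(x : ℚ_[p])‖ ≤ 1 := by
  rw [padicBall, Valuation.mem_leAddSubgroup_iff, pow_zero,
    Padic.norm_rat_le_one_iff_padicValuation_le_one]

lemma poch_div_factorial_mem_padicBall {x : ℚ} (hx : x ∈ padicBall p 0) (k : ℕ) :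
    poch x k / k.factorial ∈ padicBall p 0 := by
  rw [mem_padicBall_zero_iff_norm] at *
  let X : ℤ_[p] := ⟨x, hx⟩
  have hpoch : (poch x k : ℚ_[p]) = ((ascPochhammer ℤ_[p] k).eval X : ℤ_[p]) := by
    induction k with
    | zero => simp [poch_zero]
    | succ k ih =>
      rw [poch_succ, ascPochhammer_succ_eval, PadicInt.coe_mul, Rat.cast_mul, ih,
        PadicInt.coe_add, PadicInt.coe_natCast, Rat.cast_add, Rat.cast_natCast]
  rw [Rat.cast_div, hpoch, Rat.cast_natCast, norm_div,
    div_le_one (by simpa using k.factorial_ne_zero)]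
  exact PadicInt.norm_ascPochhammer_le k X

lemma natCast_mem_padicBall_zero (n : ℕ) : (n : ℚ) ∈ padicBall p 0 := by
  exact_mod_cast intCast_mem_padicBall_zero (p := p) n

lemma inv_natCast_mem_padicBall_zero {u : ℕ} (hu : ¬p ∣ u) : (u : ℚ)⁻¹ ∈ padicBall p 0 := by
  have hv : Rat.padicValuation p (u : ℤ) = 1 := by
    rw [Rat.padicValuation_cast, Int.padicValuation_eq_one_iff]
    exact_mod_cast hu
  rw [padicBall, Valuation.mem_leAddSubgroup_iff, map_inv₀, pow_zero, ← Int.cast_natCast, hv,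
    inv_one]

lemma prime_pow_div_mem_padicBall_one {s i : ℕ} (hi : 0 < i) (his : i < p ^ s) :
    (p : ℚ) ^ s / i ∈ padicBall p 1 := by
  have hp : p.Prime := Fact.out
  obtain ⟨t, u, hu, rfl⟩ := Nat.exists_eq_pow_mul_and_not_dvd hi.ne' p hp.ne_one
  have hu0 : 0 < u := Nat.pos_of_ne_zero fun h ↦ hu (h ▸ dvd_zero p)
  have hts : t < s := (Nat.pow_lt_pow_iff_right hp.one_lt).1
    ((Nat.le_mul_of_pos_right _ hu0).trans_lt his)
  obtain ⟨r, rfl⟩ := Nat.exists_eq_add_of_lt hts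
  have hp0 : (p : ℚ) ≠ 0 := mod_cast hp.ne_zero
  have split : (p : ℚ) ^ (t + r + 1) / ((p ^ t * u : ℕ) : ℚ) = p ^ (r + 1) * (u : ℚ)⁻¹ := by
    push_cast
    field_simp
    ring
  rw [split]
  exact padicBall_antitone (Nat.le_add_left 1 r)
    (mul_mem_padicBall_of_integral (prime_pow_mem_padicBall (r + 1))
      (inv_natCast_mem_padicBall_zero hu))

lemma prod_one_sub_sub_one_mem_padicBall {ι : Type*} {S : Finset ι} {δ : ι → ℚ} {e : ℕ}
    (hδ : ∀ i ∈ S, δ i ∈ padicBall p e) : ∏ i ∈ S, (1 - δ i) - 1 ∈ padicBall p e := by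
  classical
  induction S using Finset.induction_on with
  | empty => simp
  | insert i S hi ih =>
    have hi_mem := hδ i (mem_insert_self i S)
    have hS := ih fun j hj ↦ hδ j (mem_insert_of_mem hj)
    have hprod := mul_mem_padicBall_of_integral hi_mem (add_mem (padicBall_antitone e.zero_le hS)
      (natCast_mem_padicBall_zero 1))
    rw [prod_insert hi]
    convert sub_mem hS hprod using 1
    push_cast
    ring

lemma prod_one_sub_sub_one_sub_sum_mem_padicBall {ι : Type*} {S : Finset ι} {δ : ι → ℚ} {e : ℕ}
    (hδ : ∀ i ∈ S, δ i ∈ padicBall p e) :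
    ∏ i ∈ S, (1 - δ i) - (1 - ∑ i ∈ S, δ i) ∈ padicBall p (e + e) := by
  classical
  induction S using Finset.induction_on with
  | empty => simp
  | insert i S hi ih =>
    have hS (j) (hj : j ∈ S) := hδ j (mem_insert_of_mem hj)
    have hcross := mul_mem_padicBall (hδ i (mem_insert_self i S))
      (prod_one_sub_sub_one_mem_padicBall hS)
    rw [prod_insert hi, sum_insert hi]
    convert sub_mem (ih hS) hcross using 1
    ring

lemma padicValuation_eq_one_of_sub_one_mem_padicBall {e : ℕ} (he : 0 < e) {x : ℚ}
    (hx : x - 1 ∈ padicBall p e) : Rat.padicValuation p x = 1 := by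
  rw [padicBall, Valuation.mem_leAddSubgroup_iff, Valuation.map_sub_swap] at hx
  have hp : Rat.padicValuation p p < 1 := by
    rw [Rat.padicValuation_self]
    exact_mod_cast WithZero.exp_lt_exp.2 neg_one_lt_zero
  simpa using Valuation.map_one_sub_of_lt _ (hx.trans_lt (pow_lt_one' hp he.ne'))

lemma ne_zero_of_sub_one_mem_padicBall {e : ℕ} (he : 0 < e) {x : ℚ}
    (hx : x - 1 ∈ padicBall p e) : x ≠ 0 := by
  rintro rfl
  simpa using padicValuation_eq_one_of_sub_one_mem_padicBall he hx

lemma inv_sub_one_mem_padicBall {e : ℕ} (he : 0 < e) {x : ℚ} (hx : x - 1 ∈ padicBall p e) :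
    x⁻¹ - 1 ∈ padicBall p e := by
  have hx0 := ne_zero_of_sub_one_mem_padicBall he hx
  have hvx := padicValuation_eq_one_of_sub_one_mem_padicBall he hx
  rw [padicBall, Valuation.mem_leAddSubgroup_iff] at *
  rwa [show x⁻¹ - 1 = -((x - 1) * x⁻¹) by field_simp; ring, Valuation.map_neg, map_mul, map_inv₀,
    hvx, inv_one, mul_one]

lemma prod_div_prod_sub_mem_padicBall {ι : Type*} {S : Finset ι} {δ ε : ι → ℚ} {e : ℕ} (he : 0 < e)
    (hδ : ∀ i ∈ S, δ i ∈ padicBall p e) (hε : ∀ i ∈ S, ε i ∈ padicBall p e) :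
    (∏ i ∈ S, (1 - δ i)) / (∏ i ∈ S, (1 - ε i)) - (1 - ∑ i ∈ S, (δ i - ε i)) ∈
      padicBall p (e + e) := by
  have integral_of_sub_one {x : ℚ} (hx : x - 1 ∈ padicBall p e) : x ∈ padicBall p 0 := by
    simpa using add_mem (padicBall_antitone e.zero_le hx) (natCast_mem_padicBall_zero 1)
  have hη : ∑ i ∈ S, (δ i - ε i) ∈ padicBall p e :=
    sum_mem fun i hi ↦ sub_mem (hδ i hi) (hε i hi)
  have hnum := prod_one_sub_sub_one_sub_sum_mem_padicBall hδ
  have hden := prod_one_sub_sub_one_sub_sum_mem_padicBall hε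
  have hden_one := prod_one_sub_sub_one_mem_padicBall hε
  have hinv := inv_sub_one_mem_padicBall he hden_one
  rw [sum_sub_distrib] at *
  set A := ∑ i ∈ S, δ i
  set B := ∑ i ∈ S, ε i
  set P := ∏ i ∈ S, (1 - δ i)
  set Q := ∏ i ∈ S, (1 - ε i)
  have hlin : 1 - (A - B) ∈ padicBall p 0 := integral_of_sub_one (by simpa using neg_mem hη)
  have hcross : (A - B) * B ∈ padicBall p (e + e) := mul_mem_padicBall hη (sum_mem hε)
  have hQ : Q ≠ 0 := ne_zero_of_sub_one_mem_padicBall he hden_one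
  convert mul_mem_padicBall_of_integral
    (sub_mem (sub_mem hnum (mul_mem_padicBall_of_integral hden hlin)) hcross)
    (integral_of_sub_one hinv) using 1
  field_simp
  ring

section Expansion

variable {a : ℚ} (ha : a ∈ padicBall p 0)
include ha

lemma wpBasis_mem_padicBall_zero (k j : ℕ) : wpBasis a k j ∈ padicBall p 0 := by
  rw [wpBasis, mul_div_assoc]
  exact mul_mem_padicBall (natCast_mem_padicBall_zero _)
    (poch_div_factorial_mem_padicBall (add_mem ha (natCast_mem_padicBall_zero k)) j)

lemma wpLinCoeff_mem_padicBall_zero (i j n : ℕ) : wpLinCoeff a i j n ∈ padicBall p 0 :=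
  mul_mem_padicBall
    (mul_mem_padicBall (natCast_mem_padicBall_zero _) (natCast_mem_padicBall_zero _))
    (poch_div_factorial_mem_padicBall (add_mem ha (natCast_mem_padicBall_zero n)) _)

lemma poch_succ_div_factorial_mem_padicBall {s m : ℕ}
    (hm : a + m ∈ padicBall p s ∨ ((m + 1 : ℕ) : ℚ) ∈ padicBall p s) :
    poch a (m + 1) / m.factorial ∈ padicBall p s := by
  rcases hm with hm | hm
  · rw [poch_succ, mul_comm, mul_div_assoc]
    exact mul_mem_padicBall_of_integral hm (poch_div_factorial_mem_padicBall ha m)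
  · convert mul_mem_padicBall_of_integral hm (poch_div_factorial_mem_padicBall ha (m + 1)) using 1
    rw [factorial_succ_cast]
    push_cast
    field_simp

lemma sum_vwpWeight_mul_wpBasis_mem_padicBall {s m : ℕ}
    (hm : a + m ∈ padicBall p s ∨ ((m + 1 : ℕ) : ℚ) ∈ padicBall p s) (j : ℕ) :
    ∑ k ∈ range (m + 1), vwpWeight a k * wpBasis a k j ∈ padicBall p s := by
  rw [sum_vwpWeight_mul_wpBasis, mul_rotate, mul_assoc]
  have ha1 : a + 1 ∈ padicBall p 0 := add_mem ha (by simpa using natCast_mem_padicBall_zero 1)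
  exact mul_mem_padicBall_of_integral (poch_succ_div_factorial_mem_padicBall ha hm)
    (mul_mem_padicBall (wpBasis_mem_padicBall_zero ha1 m j)
      (neg_one_pow_mem_padicBall_zero m))

lemma sum_vwpWeight_mul_mul_mem_padicBall {s m d e : ℕ}
    (hm : a + m ∈ padicBall p s ∨ ((m + 1 : ℕ) : ℚ) ∈ padicBall p s) {N : ℕ} {A B : ℕ → ℚ}
    (hA : ∀ i < N, A i ∈ padicBall p d) (hB : ∀ j < N, B j ∈ padicBall p e) :
    ∑ k ∈ range (m + 1), vwpWeight a k *
        ((∑ i ∈ range N, A i * wpBasis a k i) * ∑ j ∈ range N, B j * wpBasis a k j) ∈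
      padicBall p (s + (d + e)) := by
  have expand : ∑ k ∈ range (m + 1), vwpWeight a k *
        ((∑ i ∈ range N, A i * wpBasis a k i) * ∑ j ∈ range N, B j * wpBasis a k j) =
      ∑ i ∈ range N, ∑ j ∈ range N, ∑ n ∈ range (i + j + 1),
        (∑ k ∈ range (m + 1), vwpWeight a k * wpBasis a k n) *
          ((A i * B j) * wpLinCoeff a i j n) := by
    simp_rw [sum_mul_sum, mul_mul_mul_comm (A _), wpBasis_mul, sum_mul, mul_sum]
    rw [sum_comm]
    refine sum_congr rfl fun i _ ↦ ?_
    rw [sum_comm]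
    refine sum_congr rfl fun j _ ↦ ?_
    rw [sum_comm]
    exact sum_congr rfl fun n _ ↦ sum_congr rfl fun k _ ↦ by ring
  rw [expand]
  refine sum_mem fun i hi ↦ sum_mem fun j hj ↦ sum_mem fun n _ ↦ ?_
  exact mul_mem_padicBall (sum_vwpWeight_mul_wpBasis_mem_padicBall ha hm n)
    (mul_mem_padicBall_of_integral
      (mul_mem_padicBall (hA i (mem_range.1 hi)) (hB j (mem_range.1 hj)))
      (wpLinCoeff_mem_padicBall_zero ha i j n))

lemma saalCoeff_one_one_mem_padicBall_zero (j : ℕ) : saalCoeff a 1 1 j ∈ padicBall p 0 := by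
  convert mul_mem_padicBall (neg_one_pow_mem_padicBall_zero j)
    (poch_div_factorial_mem_padicBall ha j) using 1
  rw [saalCoeff, poch_one]
  field_simp

lemma saalCoeff_sub_saalCoeff_mem_padicBall {e : ℕ} (he : 0 < e) {w : ℚ} {j : ℕ}
    (hw : ∀ i < j, w / (1 + i) ∈ padicBall p e) :
    saalCoeff a (1 + w) (1 - w) j - saalCoeff a 1 1 j ∈ padicBall p (e + e) := by
  have one_add_ne_zero (i : ℕ) : (1 : ℚ) + i ≠ 0 := by positivity
  have hprod := prod_one_sub_sub_one_mem_padicBall (S := range j)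
    (δ := fun i ↦ (w / (1 + i)) ^ 2) (e := e + e) fun i hi ↦ by
      rw [sq]
      exact mul_mem_padicBall (hw i (mem_range.1 hi)) (hw i (mem_range.1 hi))
  convert mul_mem_padicBall_of_integral (inv_sub_one_mem_padicBall (Nat.add_pos_left he e) hprod)
    (saalCoeff_one_one_mem_padicBall_zero ha j) using 1
  simp only [saalCoeff, mul_comm (poch (1 + w) j),
    poch_sub_mul_poch_add_eq_sq_mul_prod one_add_ne_zero]
  ring

lemma sum_vwpWeight_mul_wellPoised_sub_sq_mem_padicBall {s m e : ℕ} (he : 0 < e) {w : ℚ}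
    (hm : a + m ∈ padicBall p s ∨ ((m + 1 : ℕ) : ℚ) ∈ padicBall p s)
    (hw : ∀ i < m, w / (1 + i) ∈ padicBall p e) (hadd : ∀ i : ℕ, 1 + w + i ≠ 0)
    (hsub : ∀ i : ℕ, 1 - w + i ≠ 0) :
    ∑ k ∈ range (m + 1),
        vwpWeight a k * (wellPoised a (a - w) (a + w) k - wellPoised a a a k) ^ 2 ∈
      padicBall p (s + (e + e + (e + e))) := by
  have hcoeff (j) (hj : j < m + 1) :
      saalCoeff (1 - a) (1 + w) (1 - w) j - saalCoeff (1 - a) 1 1 j ∈ padicBall p (e + e) :=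
    saalCoeff_sub_saalCoeff_mem_padicBall
      (sub_mem (by simpa using natCast_mem_padicBall_zero 1) ha) he fun i hi ↦ hw i (by omega)
  convert sum_vwpWeight_mul_mul_mem_padicBall ha hm hcoeff hcoeff using 1
  refine sum_congr rfl fun k hk ↦ ?_
  have hkm : k ≤ m := Nat.lt_succ_iff.1 (mem_range.1 hk)
  rw [wellPoised_eq_sum_saalCoeff (fun i ↦ by convert hadd i using 2; ring)
      (fun i ↦ by convert hsub i using 2; ring) hkm,
    wellPoised_eq_sum_saalCoeff (fun i ↦ by rw [add_sub_cancel_right]; positivity)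
      (fun i ↦ by rw [add_sub_cancel_right]; positivity) hkm, ← sum_sub_distrib, sq]
  simp only [← sub_mul]
  congr! 6 <;> ring

end Expansion

end PAdic

section HalfInteger

lemma half_add_intCast_ne_zero (z : ℤ) : (1 / 2 : ℚ) + z ≠ 0 := fun h ↦ by
  have : (1 + 2 * z : ℚ) = 0 := by linear_combination 2 * h
  norm_cast at this
  omega

lemma vwpWeight_half_mul_wellPoised_half_sq (k : ℕ) :
    2 * (vwpWeight (1 / 2) k * wellPoised (1 / 2) (1 / 2) (1 / 2) k ^ 2) =
      (-1) ^ k * (4 * k + 1) * poch (1 / 2) k ^ 5 / (k.factorial : ℚ) ^ 5 := by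
  simp only [vwpWeight, wellPoised, add_sub_cancel_right, poch_one]
  field_simp
  ring

lemma sum_vwpWeight_half_mul_wellPoised {n m : ℕ} (hnm : n ≤ m) {b c : ℚ}
    (hb : ∀ i : ℕ, 1 + 1 / 2 - b + i ≠ 0) (hc : ∀ i : ℕ, 1 + 1 / 2 - c + i ≠ 0) :
    ∑ k ∈ range (m + 1),
        vwpWeight (1 / 2) k * wellPoised (1 / 2) (-n) (n + 1) k * wellPoised (1 / 2) b c k =
      (-1) ^ n * (n + 1 / 2) *
        whippleSum (1 + 1 / 2 - b - c) (1 + 1 / 2 - b) (1 + 1 / 2 - c) n := by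
  have hpoch : poch (1 / 2) n ≠ 0 :=
    poch_ne_zero (fun i ↦ mod_cast half_add_intCast_ne_zero i) n
  rw [sum_vwpWeight_mul_wellPoised_neg_natCast_mul_wellPoised hnm half_add_intCast_ne_zero hb hc,
    sub_half, poch_succ, mul_div_cancel_left₀ _ hpoch, add_comm (n : ℚ)]

lemma one_add_add_natCast_ne_zero {n : ℕ} {w : ℚ} (hw : w = n + 1 / 2) (i : ℕ) :
    1 + w + i ≠ 0 := by
  rw [hw]
  positivity

lemma one_sub_add_natCast_ne_zero {n : ℕ} {w : ℚ} (hw : w = n + 1 / 2) (i : ℕ) :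
    1 - w + i ≠ 0 := by
  convert half_add_intCast_ne_zero (i - n) using 1
  push_cast
  linear_combination -hw

lemma two_mul_sum_vwpWeight_half_mul_wellPoised_sub_sq {n m : ℕ} (hnm : n ≤ m) {w : ℚ}
    (hw : w = n + 1 / 2) :
    2 * ∑ k ∈ range (m + 1), vwpWeight (1 / 2) k *
        (wellPoised (1 / 2) (1 / 2 - w) (1 / 2 + w) k -
          wellPoised (1 / 2) (1 / 2) (1 / 2) k) ^ 2 =
      ∑ k ∈ range (m + 1),
          (-1) ^ k * (4 * k + 1) * poch (1 / 2) k ^ 5 / (k.factorial : ℚ) ^ 5 -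
        (-1) ^ n * (2 * n + 1) *
          (2 * whippleSum (1 / 2) 1 1 n - whippleSum (1 / 2) (1 + w) (1 - w) n) := by
  have hb : (1 : ℚ) + 1 / 2 - (1 / 2 - w) = 1 + w := by ring
  have hc : (1 : ℚ) + 1 / 2 - (1 / 2 + w) = 1 - w := by ring
  have hg : (1 : ℚ) + 1 / 2 - (1 / 2 - w) - (1 / 2 + w) = 1 / 2 := by ring
  have pure := sum_vwpWeight_half_mul_wellPoised hnm (b := 1 / 2 - w) (c := 1 / 2 + w)
    (by rw [hb]; exact one_add_add_natCast_ne_zero hw)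
    (by rw [hc]; exact one_sub_add_natCast_ne_zero hw)
  have mixed := sum_vwpWeight_half_mul_wellPoised hnm (b := 1 / 2) (c := 1 / 2)
    (fun i ↦ by rw [add_sub_cancel_right]; positivity)
    (fun i ↦ by rw [add_sub_cancel_right]; positivity)
  rw [hg, hb, hc] at pure
  rw [add_sub_cancel_right, sub_half] at mixed
  simp only [← vwpWeight_half_mul_wellPoised_half_sq]
  calc _ = ∑ k ∈ range (m + 1),
            2 * (vwpWeight (1 / 2) k * wellPoised (1 / 2) (1 / 2) (1 / 2) k ^ 2) -
          2 * (2 * ∑ k ∈ range (m + 1), vwpWeight (1 / 2) k * wellPoised (1 / 2) (-n) (n + 1) k *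
              wellPoised (1 / 2) (1 / 2) (1 / 2) k -
            ∑ k ∈ range (m + 1), vwpWeight (1 / 2) k * wellPoised (1 / 2) (-n) (n + 1) k *
              wellPoised (1 / 2) (1 / 2 - w) (1 / 2 + w) k) := by
        simp only [mul_sum, ← sum_sub_distrib]
        refine sum_congr rfl fun k _ ↦ ?_
        rw [show 1 / 2 - w = -n by rw [hw]; ring, show 1 / 2 + w = n + 1 by rw [hw]; ring]
        ring
    _ = _ := by
        rw [pure, mixed]
        ring

lemma whippleSum_half_one_one_two_mul (q : ℕ) :
    whippleSum (1 / 2) 1 1 (2 * q) = poch (1 / 2) q ^ 2 / poch 1 q ^ 2 := by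
  have one_add_ne_zero (i : ℕ) : (1 : ℚ) + i ≠ 0 := by positivity
  rw [whippleSum_two_mul one_add_ne_zero one_add_ne_zero (by norm_num)]
  norm_num [sq]

lemma whippleSum_half_one_one_two_mul_add_one (q : ℕ) :
    whippleSum (1 / 2) 1 1 (2 * q + 1) = 0 := by
  have one_add_ne_zero (i : ℕ) : (1 : ℚ) + i ≠ 0 := by positivity
  rw [whippleSum_two_mul_add_one one_add_ne_zero one_add_ne_zero (by norm_num), sub_self,
    zero_div, poch_succ_left 0, zero_mul, zero_mul, zero_div]

lemma whippleSum_half_one_add_one_sub_two_mul {w : ℚ} (hadd : ∀ i : ℕ, 1 + w + i ≠ 0)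
    (hsub : ∀ i : ℕ, 1 - w + i ≠ 0) (q : ℕ) :
    whippleSum (1 / 2) (1 + w) (1 - w) (2 * q) = poch (1 / 2) q ^ 2 / poch 1 q ^ 2 *
      ((∏ i ∈ range q, (1 - (w / (2 * i + 1)) ^ 2)) /
        ∏ i ∈ range q, (1 - (w / (2 * i + 2)) ^ 2)) := by
  have num := poch_sub_mul_poch_add_eq_sq_mul_prod (x := 1 / 2)
    (fun i ↦ mod_cast half_add_intCast_ne_zero i) (w / 2) q
  have den := poch_sub_mul_poch_add_eq_sq_mul_prod (x := 1) (fun i ↦ by positivity) (w / 2) q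
  have half_num (i : ℕ) : w / 2 / (1 / 2 + i) = w / (2 * i + 1) := by field_simp; ring
  have half_den (i : ℕ) : w / 2 / (1 + i) = w / (2 * i + 2) := by field_simp; ring
  simp only [half_num] at num
  simp only [half_den] at den
  rw [whippleSum_two_mul hadd hsub (by ring), ← mul_div_mul_comm, ← num, ← den,
    mul_comm (poch (1 - w / 2) q)]
  congr! 3 <;> ring

lemma whippleSum_half_one_add_one_sub_two_mul_add_one {w : ℚ} {q : ℕ}
    (hw : w = 2 * q + 3 / 2) :
    whippleSum (1 / 2) (1 + w) (1 - w) (2 * q + 1) =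
      (4 * q + 3) * (poch (3 / 4) (2 * q + 1) / poch (5 / 4) (2 * q + 1)) := by
  subst hw
  have num : poch ((1 - (1 + (2 * q + 3 / 2))) / 2) (q + 1) *
        poch ((1 - (1 - (2 * q + 3 / 2))) / 2) (q + 1) =
      (-1) ^ (q + 1) * (3 / 4 + q) * poch (3 / 4) (2 * q + 1) := by
    rw [show ((1 - (1 + (2 * q + 3 / 2))) / 2 : ℚ) = 1 - 3 / 4 - (q + 1 : ℕ) by push_cast; ring,
      show ((1 - (1 - (2 * q + 3 / 2))) / 2 : ℚ) = 3 / 4 + q by ring, poch_one_sub_sub,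
      show 2 * q + 1 = q + (q + 1) by ring, poch_add _ q (q + 1), poch_succ (3 / 4)]
    ring
  have den : poch ((1 + (2 * q + 3 / 2)) / 2) (q + 1) *
        poch ((1 - (2 * q + 3 / 2)) / 2) (q + 1) =
      (-1) ^ (q + 1) * (1 / 4) * poch (5 / 4) (2 * q + 1) := by
    rw [show ((1 + (2 * q + 3 / 2)) / 2 : ℚ) = 5 / 4 + q by ring,
      show ((1 - (2 * q + 3 / 2)) / 2 : ℚ) = 1 - 1 / 4 - (q + 1 : ℕ) by push_cast; ring,
      poch_one_sub_sub, show 2 * q + 1 = q + (q + 1) by ring, poch_add _ q (q + 1),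
      poch_succ_left (1 / 4), show (1 / 4 + 1 : ℚ) = 5 / 4 by norm_num]
    ring
  have hw : (2 * q + 3 / 2 : ℚ) = (2 * q + 1 : ℕ) + 1 / 2 := by
    push_cast
    ring
  rw [whippleSum_two_mul_add_one (one_add_add_natCast_ne_zero hw)
    (one_sub_add_natCast_ne_zero hw) (by ring), num, den]
  field_simp
  ring

lemma harm_succ (n l : ℕ) : harm (n + 1) l = harm n l + 1 / (n + 1 : ℚ) ^ l := by
  rw [harm, harm, sum_Icc_succ_top (by omega), Nat.cast_succ]

lemma sum_odd_sub_even_inv_pow (q l : ℕ) :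
    ∑ i ∈ range q, ((1 / (2 * i + 1) : ℚ) ^ l - (1 / (2 * i + 2)) ^ l) =
      harm (2 * q) l - 2 / 2 ^ l * harm q l := by
  induction q with
  | zero => simp [harm]
  | succ q ih =>
    rw [sum_range_succ, ih, show 2 * (q + 1) = 2 * q + 1 + 1 by ring]
    simp only [harm_succ]
    push_cast
    rw [show (2 * (q : ℚ) + 1 + 1) = 2 * (q + 1) by ring,
      show (2 * (q : ℚ) + 2) = 2 * (q + 1) by ring]
    simp only [mul_pow, div_pow, one_pow]
    field_simp
    ring

end HalfInteger

section TruncatedSum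

variable {p : ℕ} [Fact p.Prime] (hodd : Odd p) {s : ℕ}
include hodd

lemma half_mem_padicBall_zero : (1 / 2 : ℚ) ∈ padicBall p 0 := by
  rw [one_div]
  refine mod_cast inv_natCast_mem_padicBall_zero (u := 2) fun h ↦ ?_
  obtain rfl := (Nat.prime_dvd_prime_iff_eq Fact.out Nat.prime_two).1 h
  exact absurd hodd (by decide)

lemma half_prime_pow_div_mem_padicBall_one {i : ℕ} (hi : 0 < i) (his : i < p ^ s) :
    (p : ℚ) ^ s / 2 / i ∈ padicBall p 1 := by
  convert mul_mem_padicBall_of_integral (prime_pow_div_mem_padicBall_one hi his)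
    (half_mem_padicBall_zero hodd) using 1
  ring

lemma half_prime_pow_div_sq_mem_padicBall_two {i : ℕ} (hi : 0 < i) (his : i < p ^ s) :
    ((p : ℚ) ^ s / 2 / i) ^ 2 ∈ padicBall p 2 := by
  have := half_prime_pow_div_mem_padicBall_one hodd hi his
  rw [sq]
  exact mul_mem_padicBall this this

lemma prod_div_prod_sub_harm_mem_padicBall {q : ℕ} (hq : 2 * q < p ^ s) :
    (∏ i ∈ range q, (1 - ((p : ℚ) ^ s / 2 / (2 * i + 1)) ^ 2)) /
        (∏ i ∈ range q, (1 - ((p : ℚ) ^ s / 2 / (2 * i + 2)) ^ 2)) -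
      (1 - ((p : ℚ) ^ s / 2) ^ 2 * (harm (2 * q) 2 - harm q 2 / 2)) ∈ padicBall p 4 := by
  have hnum (i) (hi : i ∈ range q) :
      ((p : ℚ) ^ s / 2 / (2 * i + 1)) ^ 2 ∈ padicBall p 2 := by
    rw [mem_range] at hi
    exact_mod_cast half_prime_pow_div_sq_mem_padicBall_two hodd (s := s) (i := 2 * i + 1)
      (by omega) (by omega)
  have hden (i) (hi : i ∈ range q) :
      ((p : ℚ) ^ s / 2 / (2 * i + 2)) ^ 2 ∈ padicBall p 2 := by
    rw [mem_range] at hi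
    exact_mod_cast half_prime_pow_div_sq_mem_padicBall_two hodd (s := s) (i := 2 * i + 2)
      (by omega) (by omega)
  have harmonic : ((p : ℚ) ^ s / 2) ^ 2 * (harm (2 * q) 2 - harm q 2 / 2) =
      ∑ i ∈ range q, (((p : ℚ) ^ s / 2 / (2 * i + 1)) ^ 2 -
        ((p : ℚ) ^ s / 2 / (2 * i + 2)) ^ 2) := by
    calc ((p : ℚ) ^ s / 2) ^ 2 * (harm (2 * q) 2 - harm q 2 / 2)
      _ = ((p : ℚ) ^ s / 2) ^ 2 *
            ∑ i ∈ range q, ((1 / (2 * i + 1) : ℚ) ^ 2 - (1 / (2 * i + 2)) ^ 2) := by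
          rw [sum_odd_sub_even_inv_pow]
          ring
      _ = _ := by
          rw [mul_sum]
          exact sum_congr rfl fun i _ ↦ by ring
  rw [harmonic]
  exact prod_div_prod_sub_mem_padicBall two_pos hnum hden

variable {M m : ℕ} (hps : p ^ s = 2 * M + 1) (hm : m = M ∨ m = 2 * M)
include hps hm

lemma half_add_or_succ_mem_padicBall :
    (1 / 2 : ℚ) + m ∈ padicBall p s ∨ ((m + 1 : ℕ) : ℚ) ∈ padicBall p s := by
  have hpsq : (p : ℚ) ^ s = 2 * M + 1 := by exact_mod_cast hps
  rcases hm with rfl | rfl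
  · left
    convert mul_mem_padicBall_of_integral (prime_pow_mem_padicBall s)
      (half_mem_padicBall_zero hodd) using 1
    linear_combination -hpsq / 2
  · right
    rw [← hps, Nat.cast_pow]
    exact prime_pow_mem_padicBall s

lemma sum_sub_whippleSum_mem_padicBall :
    ∑ k ∈ range (m + 1), (-1 : ℚ) ^ k * (4 * k + 1) * poch (1 / 2) k ^ 5 / (k.factorial : ℚ) ^ 5 -
        (-1) ^ M * p ^ s * (2 * whippleSum (1 / 2) 1 1 M -
          whippleSum (1 / 2) (1 + p ^ s / 2) (1 - p ^ s / 2) M) ∈ padicBall p (s + 4) := by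
  have hpsq : (p : ℚ) ^ s = 2 * M + 1 := by exact_mod_cast hps
  have hw : (p : ℚ) ^ s / 2 = M + 1 / 2 := by linear_combination hpsq / 2
  have hsmall (i : ℕ) (hi : i < m) : (p : ℚ) ^ s / 2 / (1 + i) ∈ padicBall p 1 := by
    simpa [add_comm] using
      half_prime_pow_div_mem_padicBall_one hodd (s := s) i.succ_pos (by omega)
  have square := sum_vwpWeight_mul_wellPoised_sub_sq_mem_padicBall (half_mem_padicBall_zero hodd)
    one_pos (half_add_or_succ_mem_padicBall hodd hps hm) hsmall
    (one_add_add_natCast_ne_zero hw) (one_sub_add_natCast_ne_zero hw)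
  have double := two_mul_sum_vwpWeight_half_mul_wellPoised_sub_sq (by omega : M ≤ m) hw
  rw [← hpsq, two_mul] at double
  rw [← double]
  exact add_mem square square

lemma sum_sub_mem_padicBall_of_even {q : ℕ} (hq : M = 2 * q) :
    ∑ k ∈ range (m + 1), (-1 : ℚ) ^ k * (4 * k + 1) * poch (1 / 2) k ^ 5 / (k.factorial : ℚ) ^ 5 -
        poch (1 / 2) q ^ 2 / poch 1 q ^ 2 * ((p : ℚ) ^ s +
          (p : ℚ) ^ (3 * s) / 4 * harm (2 * q) 2 - (p : ℚ) ^ (3 * s) / 8 * harm q 2) ∈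
      padicBall p (s + 4) := by
  subst hq
  have hpsq : (p : ℚ) ^ s = 2 * (2 * q : ℕ) + 1 := by exact_mod_cast hps
  have hw : (p : ℚ) ^ s / 2 = (2 * q : ℕ) + 1 / 2 := by linear_combination hpsq / 2
  have hW : poch (1 / 2) q ^ 2 / poch 1 q ^ 2 ∈ padicBall p 0 := by
    have := poch_div_factorial_mem_padicBall (half_mem_padicBall_zero hodd) q
    rw [poch_one, ← div_pow, sq]
    exact mul_mem_padicBall this this
  have hquot := prod_div_prod_sub_harm_mem_padicBall hodd (s := s) (q := q) (by omega)
  have hmain := sum_sub_whippleSum_mem_padicBall hodd hps hm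
  rw [whippleSum_half_one_one_two_mul, whippleSum_half_one_add_one_sub_two_mul
    (one_add_add_natCast_ne_zero hw) (one_sub_add_natCast_ne_zero hw),
    (even_two_mul q).neg_one_pow] at hmain
  convert sub_mem hmain (mul_mem_padicBall (prime_pow_mem_padicBall s)
    (mul_mem_padicBall hquot hW)) using 1
  ring

lemma sum_sub_mem_padicBall_of_odd {q : ℕ} (hq : M = 2 * q + 1) :
    ∑ k ∈ range (m + 1), (-1 : ℚ) ^ k * (4 * k + 1) * poch (1 / 2) k ^ 5 / (k.factorial : ℚ) ^ 5 -
        (p : ℚ) ^ (2 * s) * (poch (3 / 4) (2 * q + 1) / poch (5 / 4) (2 * q + 1)) ∈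
      padicBall p (s + 4) := by
  subst hq
  have hpsq : (p : ℚ) ^ s = 4 * q + 3 := by
    have : (p : ℚ) ^ s = 2 * (2 * q + 1 : ℕ) + 1 := by exact_mod_cast hps
    push_cast at this
    linear_combination this
  have hmain := sum_sub_whippleSum_mem_padicBall hodd hps hm
  rw [whippleSum_half_one_one_two_mul_add_one,
    whippleSum_half_one_add_one_sub_two_mul_add_one (q := q) (by linear_combination hpsq / 2),
    ← hpsq, (odd_two_mul_add_one q).neg_one_pow] at hmain
  convert hmain using 2
  ring

end TruncatedSum

theorem stmt3 (p : ℕ) (hp : p.Prime) (hodd : Odd p) (s : ℕ) (hs : 0 < s)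
    (m : ℕ) (hm : m = (p ^ s - 1) / 2 ∨ m = p ^ s - 1) :
    (p ^ s % 4 = 1 →
      pcong p (s + 4)
        (∑ k ∈ Finset.range (m + 1),
          (-1 : ℚ) ^ k * (4 * k + 1) * poch (1 / 2) k ^ 5 / (k.factorial : ℚ) ^ 5)
        (poch (1 / 2) ((p ^ s - 1) / 4) ^ 2 / poch 1 ((p ^ s - 1) / 4) ^ 2 *
          ((p : ℚ) ^ s + (p : ℚ) ^ (3 * s) / 4 * harm ((p ^ s - 1) / 2) 2 -
            (p : ℚ) ^ (3 * s) / 8 * harm ((p ^ s - 1) / 4) 2))) ∧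
    (p ^ s % 4 = 3 →
      pcong p (s + 4)
        (∑ k ∈ Finset.range (m + 1),
          (-1 : ℚ) ^ k * (4 * k + 1) * poch (1 / 2) k ^ 5 / (k.factorial : ℚ) ^ 5)
        ((p : ℚ) ^ (2 * s) *
          (poch (3 / 4) ((p ^ s - 1) / 2) / poch (5 / 4) ((p ^ s - 1) / 2)))) := by
  have : Fact p.Prime := ⟨hp⟩
  obtain ⟨M, hM⟩ := hodd.pow (n := s)
  have hhalf : (p ^ s - 1) / 2 = M := by omega
  replace hm : m = M ∨ m = 2 * M := by omega
  rw [hhalf]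
  refine ⟨fun hmod ↦ ?_, fun hmod ↦ ?_⟩
  · obtain ⟨q, rfl⟩ : ∃ q, M = 2 * q := ⟨M / 2, by omega⟩
    rw [show (p ^ s - 1) / 4 = q by omega]
    exact pcong_of_sub_mem_padicBall (sum_sub_mem_padicBall_of_even hodd hM hm rfl)
  · obtain ⟨q, rfl⟩ : ∃ q, M = 2 * q + 1 := ⟨M / 2, by omega⟩
    exact pcong_of_sub_mem_padicBall (sum_sub_mem_padicBall_of_odd hodd hM hm rfl)
end
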